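/- Let G ∈ G_{n,n+2} with n ≥ 1. If G is not a weak subdivision of K₄, then there exists a bridgeless graph H ∈ G_{n,n+2} such that d_2(H) < d_2(G) and d_3(H) < d_3(G). Hence, for every p ∈ (0,1), any p-optimal (n,n+2)-graph is a weak subdivision of K₄. -/

import Mathlib

open Classical Finset

noncomputable section

/-- A finite multigraph: edges carry two (possibly equal) endpoints. -/
structure Multigraph where
  V : Type
  E : Type
  [fintV : Fintype V]
  [fintE : Fintype E]
  src : E → V
  tgt : E → V

attribute [instance] Multigraph.fintV Multigraph.fintE

namespace Multigraph

variable (G : Multigraph)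

/-- Number of vertices. -/
def nV : ℕ := Fintype.card G.V

/-- Number of edges (with multiplicity). -/
def nE : ℕ := Fintype.card G.E

/-- One step along an edge belonging to the edge set `S`. -/
def stepOn (S : Finset G.E) (u v : G.V) : Prop :=
  ∃ e ∈ S, (G.src e = u ∧ G.tgt e = v) ∨ (G.src e = v ∧ G.tgt e = u)

/-- The spanning subgraph with edge set `S` is connected. -/
def ConnOn (S : Finset G.E) : Prop :=
  ∀ u v : G.V, Relation.ReflTransGen (G.stepOn S) u v

/-- `G` is connected. -/
def Connected : Prop := G.ConnOn Finset.univ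

/-- The edge set `F` disconnects `G` (i.e. is a disconnection). -/
def Disconnects (F : Finset G.E) : Prop := ¬ G.ConnOn (Finset.univ \ F)

/-- `d i G`: the number of `i`-disconnections of `G`. -/
def d (i : ℕ) : ℕ :=
  ((Finset.univ : Finset (Finset G.E)).filter fun F => F.card = i ∧ G.Disconnects F).card

/-- The all-terminal reliability `R(G,p)`: each edge is independently retained with
probability `p`; this is the probability that the retained spanning subgraph is connected. -/
def rel (p : ℝ) : ℝ :=
  ∑ S : Finset G.E, if G.ConnOn S then p ^ S.card * (1 - p) ^ (G.nE - S.card) else 0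

/-- `e` is a bridge. -/
def IsBridge (e : G.E) : Prop := G.Disconnects {e}

def Bridgeless : Prop := ∀ e : G.E, ¬ G.IsBridge e

/-- The number of spanning trees of `G` (connected spanning subgraphs with `nV - 1` edges). -/
def treeCount : ℕ :=
  ((Finset.univ : Finset (Finset G.E)).filter fun S => S.card + 1 = G.nV ∧ G.ConnOn S).card

/-- The edge-connectivity: the least size of a disconnecting set of edges. -/
def edgeConnectivity : ℕ :=
  sInf {i : ℕ | ∃ F : Finset G.E, F.card = i ∧ G.Disconnects F}

/-- Degree of a vertex (a loop counts twice). -/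
def deg (v : G.V) : ℕ :=
  (Finset.univ.filter fun e => G.src e = v).card +
    (Finset.univ.filter fun e => G.tgt e = v).card

/-- The edges crossing the vertex set `A`. -/
def cutEdges (A : Finset G.V) : Finset G.E :=
  Finset.univ.filter fun e =>
    (G.src e ∈ A ∧ G.tgt e ∉ A) ∨ (G.src e ∉ A ∧ G.tgt e ∈ A)

/-- `F` is a cut: the set of edges crossing a nontrivial bipartition of the vertices. -/
def IsCut (F : Finset G.E) : Prop :=
  ∃ A : Finset G.V, A.Nonempty ∧ A ≠ Finset.univ ∧ F = G.cutEdges A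

/-- `F` is a bond: a minimal cut. -/
def IsBond (F : Finset G.E) : Prop :=
  G.IsCut F ∧ ∀ F' ⊆ F, G.IsCut F' → F' = F

/-- Number of `s`-bonds of `G`. -/
def bondCount (s : ℕ) : ℕ :=
  ((Finset.univ : Finset (Finset G.E)).filter fun F => F.card = s ∧ G.IsBond F).card

/-- Adjacency of vertices. -/
def Adj (u v : G.V) : Prop :=
  ∃ e : G.E, (G.src e = u ∧ G.tgt e = v) ∨ (G.src e = v ∧ G.tgt e = u)

/-- `G` is simple: no loops and no parallel edges. -/
def IsSimple : Prop :=
  (∀ e : G.E, G.src e ≠ G.tgt e) ∧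
    ∀ e f : G.E,
      ((G.src e = G.src f ∧ G.tgt e = G.tgt f) ∨ (G.src e = G.tgt f ∧ G.tgt e = G.src f)) →
        e = f

end Multigraph

/-- `G ∈ 𝒢_{n,m}`: connected with `n` vertices and `m` edges. -/
def memG (G : Multigraph) (n m : ℕ) : Prop :=
  G.nV = n ∧ G.nE = m ∧ G.Connected

/-- Isomorphism of multigraphs. -/
structure MGIso (G H : Multigraph) where
  vMap : G.V ≃ H.V
  eMap : G.E ≃ H.E
  ends_eq : ∀ e : G.E,
    (H.src (eMap e) = vMap (G.src e) ∧ H.tgt (eMap e) = vMap (G.tgt e)) ∨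
    (H.src (eMap e) = vMap (G.tgt e) ∧ H.tgt (eMap e) = vMap (G.src e))

def IsIso (G H : Multigraph) : Prop := Nonempty (MGIso G H)

/-- `G` is `p`-optimal in `𝒢_{n,m}`. -/
def pOptimal (G : Multigraph) (n m : ℕ) (p : ℝ) : Prop :=
  memG G n m ∧ ∀ H : Multigraph, memG H n m → H.rel p ≤ G.rel p

/-- `G` is uniquely optimal in `𝒢_{n,m}`: strictly more reliable than every
non-isomorphic member, for every `p ∈ (0,1)`. -/
def UniquelyOptimal (G : Multigraph) (n m : ℕ) : Prop :=
  memG G n m ∧ ∀ H : Multigraph, memG H n m → ¬ IsIso G H →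
    ∀ p : ℝ, 0 < p → p < 1 → H.rel p < G.rel p

noncomputable instance quotFintype {α : Type} [Fintype α] {r : α → α → Prop} :
    Fintype (Quot r) :=
  letI := Classical.decEq (Quot r)
  Fintype.ofSurjective (Quot.mk r) fun q => Quot.exists_rep q

/-- Identification of the endpoints of zero-weight edges. -/
def zeroRel (D : Multigraph) (w : D.E → ℕ) : D.V → D.V → Prop :=
  fun u v => ∃ e : D.E, w e = 0 ∧ D.src e = u ∧ D.tgt e = v

/-- The `j`-th node along the chain replacing the edge `e` (whose chain has `w e` edges). -/
def chainNode (D : Multigraph) (w : D.E → ℕ) (e : D.E) (j : ℕ) :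
    Quot (zeroRel D w) ⊕ (Σ f : D.E, Fin (w f - 1)) :=
  if h : 0 < j ∧ j < w e then Sum.inr ⟨e, ⟨j - 1, by omega⟩⟩
  else if j = 0 then Sum.inl (Quot.mk _ (D.src e))
  else Sum.inl (Quot.mk _ (D.tgt e))

/-- The weak subdivision of `D` determined by the chain lengths `w`: each edge `e` is
replaced by a chain with `w e` edges; zero-weight edges are contracted. -/
def subdivide (D : Multigraph) (w : D.E → ℕ) : Multigraph where
  V := Quot (zeroRel D w) ⊕ (Σ f : D.E, Fin (w f - 1))
  E := Σ f : D.E, Fin (w f)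
  src f := chainNode D w f.1 f.2.val
  tgt f := chainNode D w f.1 (f.2.val + 1)

/-- The zero-weight edges contain no cycle (no "zero cycle"): they form a forest. -/
def ZeroAcyclic (D : Multigraph) (w : D.E → ℕ) : Prop :=
  Fintype.card (Quot (zeroRel D w)) +
      (Finset.univ.filter fun e : D.E => w e = 0).card = Fintype.card D.V

/-- `G` is a weak subdivision of `D` with chain lengths `w`. -/
def IsWeakSubdivision (G D : Multigraph) (w : D.E → ℕ) : Prop :=
  ZeroAcyclic D w ∧ IsIso G (subdivide D w)

/-- `D` is a weak distillation of `G`. -/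
def IsWeakDistillation (D G : Multigraph) : Prop :=
  ∃ w : D.E → ℕ, IsWeakSubdivision G D w

/-- The chain lengths differ pairwise by at most one. -/
def BalancedWeights {E : Type} (w : E → ℕ) : Prop := ∀ e f : E, w e ≤ w f + 1

/-- `D ∈ 𝒟_k`: connected, cubic, 3-edge-connected, of exceedance `k`. -/
def memDk (k : ℕ) (D : Multigraph) : Prop :=
  D.Connected ∧ (∀ v : D.V, D.deg v = 3) ∧
    (∀ F : Finset D.E, D.Disconnects F → 3 ≤ F.card) ∧ D.nE = D.nV + k

/-- Identification of the two endpoints of the edge `e`. -/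
def contractRel (G : Multigraph) (e : G.E) : G.V → G.V → Prop :=
  fun u v => u = G.src e ∧ v = G.tgt e

/-- Contraction of the edge `e`. -/
def Multigraph.contract (G : Multigraph) (e : G.E) : Multigraph :=
  letI := Classical.decEq G.E
  { V := Quot (contractRel G e)
    E := {f : G.E // f ≠ e}
    src := fun f => Quot.mk _ (G.src f.1)
    tgt := fun f => Quot.mk _ (G.tgt f.1) }

/-- `G'` is obtained from `G` by shifting an edge: in an intermediate graph `H`
(the expansion of `G` at a vertex by the new edge `e'`), the edges `e, e'` form a
2-bond; contracting `e'` gives back `G`, while contracting `e` gives `G'`. -/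
def IsShiftOf (G G' : Multigraph) : Prop :=
  ∃ (H : Multigraph) (e e' : H.E), e ≠ e' ∧
    H.src e ≠ H.tgt e ∧ H.src e' ≠ H.tgt e' ∧
    H.IsBond {e, e'} ∧
    IsIso (H.contract e') G ∧ IsIso (H.contract e) G'

/-- Equivalence of graphs: repeated edge shifting. -/
def EquivalentGraphs (G G' : Multigraph) : Prop :=
  Relation.ReflTransGen IsShiftOf G G'

/-- `G'` is obtained from `G` by moving the (non-loop) edge `e`: contracting `e` and
expanding a new edge, identified with `e` via `φ`, at an arbitrary vertex.
Equivalently, `G/e` and `G'/φ e` agree, compatibly with the edge identification `φ`. -/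
def MovedEdge (G G' : Multigraph) (φ : G.E ≃ G'.E) (e : G.E) : Prop :=
  G.src e ≠ G.tgt e ∧ G'.src (φ e) ≠ G'.tgt (φ e) ∧
  ∃ ψ : Quot (contractRel G e) ≃ Quot (contractRel G' (φ e)),
    ∀ f : G.E, f ≠ e →
      ((ψ (Quot.mk _ (G.src f)) = Quot.mk _ (G'.src (φ f)) ∧
        ψ (Quot.mk _ (G.tgt f)) = Quot.mk _ (G'.tgt (φ f))) ∨
       (ψ (Quot.mk _ (G.src f)) = Quot.mk _ (G'.tgt (φ f)) ∧
        ψ (Quot.mk _ (G.tgt f)) = Quot.mk _ (G'.src (φ f))))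

/-- Move one edge from the chain `a` to the chain `b`. -/
def moveWeight {E : Type} (w : E → ℕ) (a b : E) : E → ℕ :=
  fun g => if g = b then w b + 1 else if g = a then w a - 1 else w g

/-- The chains of maximal length. -/
def maxChains (D : Multigraph) (w : D.E → ℕ) : Finset D.E :=
  Finset.univ.filter fun e => ∀ f : D.E, w f ≤ w e

/-- The chains of minimal length. -/
def minChains (D : Multigraph) (w : D.E → ℕ) : Finset D.E :=
  Finset.univ.filter fun e => ∀ f : D.E, w e ≤ w f

/-- Degree of `v` within the edge set `S`. -/
def degIn (D : Multigraph) (S : Finset D.E) (v : D.V) : ℕ :=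
  (S.filter fun e => D.src e = v).card + (S.filter fun e => D.tgt e = v).card

/-- `S` is a matching (pairwise non-adjacent edges). -/
def IsMatchingIn (D : Multigraph) (S : Finset D.E) : Prop := ∀ v : D.V, degIn D S v ≤ 1

/-- `S` is a path with three edges. -/
def IsPath3In (D : Multigraph) (S : Finset D.E) : Prop :=
  S.card = 3 ∧ (∀ v : D.V, degIn D S v ≤ 2) ∧
    (Finset.univ.filter fun v : D.V => degIn D S v = 1).card = 2

/-- `S` is the disjoint union of a path with three edges and a single edge. -/
def IsPath3PlusEdgeIn (D : Multigraph) (S : Finset D.E) : Prop :=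
  S.card = 4 ∧ (∀ v : D.V, degIn D S v ≤ 2) ∧
    (Finset.univ.filter fun v : D.V => degIn D S v = 1).card = 4 ∧
    ∃ e ∈ S, degIn D S (D.src e) = 2 ∧ degIn D S (D.tgt e) = 2

/-- `S` is the disjoint union of two paths with two edges each. -/
def IsTwoPlusTwoIn (D : Multigraph) (S : Finset D.E) : Prop :=
  S.card = 4 ∧ (∀ v : D.V, degIn D S v ≤ 2) ∧
    (Finset.univ.filter fun v : D.V => degIn D S v = 1).card = 4 ∧
    ∀ e ∈ S, degIn D S (D.src e) = 1 ∨ degIn D S (D.tgt e) = 1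

/-- Two edges sharing a vertex. -/
def AdjEdges (D : Multigraph) (a b : D.E) : Prop :=
  ∃ v : D.V, (D.src a = v ∨ D.tgt a = v) ∧ (D.src b = v ∨ D.tgt b = v)

/-- The number of incidences of edges of weight `c` at the vertex `u`. -/
def incCount (D : Multigraph) (w : D.E → ℕ) (u : D.V) (c : ℕ) : ℕ :=
  (Finset.univ.filter fun e : D.E => D.src e = u ∧ w e = c).card +
    (Finset.univ.filter fun e : D.E => D.tgt e = u ∧ w e = c).card

/-- The `π^v`-value of the vertex `u`: the number of incident edges of weight `q + 1`
minus the number of incident edges of weight `q - 1`. -/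
def piV (D : Multigraph) (w : D.E → ℕ) (q : ℕ) (u : D.V) : ℤ :=
  (incCount D w u (q + 1) : ℤ) -
    (if q = 0 then 0 else (incCount D w u (q - 1) : ℤ))

/-- The `π^v`-values are balanced: pairwise differences at most one. -/
def BalancedPiV (D : Multigraph) (w : D.E → ℕ) (q : ℕ) : Prop :=
  ∀ u v : D.V, piV D w q u ≤ piV D w q v + 1

/-- The standard weight `q`, where `m = 3kq + r` with `-3k/2 < r ≤ 3k/2`. -/
def stdWeight (m k : ℕ) : ℕ := (2 * m + 3 * k - 1) / (6 * k)

/-- `w` is a balanced weighting of `D` of total size `m` (the implied weak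
subdivision is the generic member of `ℬ_m(D)`). -/
def IsBalancedWeighting (D : Multigraph) (w : D.E → ℕ) (m : ℕ) : Prop :=
  (∑ e : D.E, w e) = m ∧ BalancedWeights w ∧ ZeroAcyclic D w

/-- Every 3-bond of `D` is trivial (consists of the three edges at a single vertex). -/
def OnlyTrivialThreeBonds (D : Multigraph) : Prop :=
  ∀ F : Finset D.E, D.IsBond F → F.card = 3 →
    ∃ u : D.V, F = Finset.univ.filter fun e => D.src e = u ∨ D.tgt e = u

/-- The 3-dipole: two vertices joined by three parallel edges. -/
def dipole3 : Multigraph where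
  V := Fin 2
  E := Fin 3
  src _ := 0
  tgt _ := 1

/-- The complete graph `K₄`. -/
def K4 : Multigraph where
  V := Fin 4
  E := {p : Fin 4 × Fin 4 // p.1 < p.2}
  src p := p.1.1
  tgt p := p.1.2

/-- The complete bipartite graph `K_{3,3}`. -/
def K33 : Multigraph where
  V := Fin 3 ⊕ Fin 3
  E := Fin 3 × Fin 3
  src p := Sum.inl p.1
  tgt p := Sum.inr p.2

/-- The triangular prism `Π₃`; the edges `Sum.inr i` are the rungs. -/
def prism : Multigraph where
  V := Fin 3 × Bool
  E := (Fin 3 × Bool) ⊕ Fin 3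
  src := fun e => match e with
    | Sum.inl (i, b) => (i, b)
    | Sum.inr i => (i, false)
  tgt := fun e => match e with
    | Sum.inl (i, b) => (i + 1, b)
    | Sum.inr i => (i, true)

/-- The Wagner graph (the 4-Möbius ladder): the edges `Sum.inl i` are the rails
(the 8-cycle) and the edges `Sum.inr j` are the rungs. -/
def wagner : Multigraph where
  V := Fin 8
  E := Fin 8 ⊕ Fin 4
  src := fun e => match e with
    | Sum.inl i => i
    | Sum.inr j => ⟨j.val, by omega⟩
  tgt := fun e => match e with
    | Sum.inl i => i + 1
    | Sum.inr j => ⟨j.val + 4, by omega⟩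

/-- The Petersen graph. -/
def petersen : Multigraph where
  V := Fin 5 × Bool
  E := Fin 5 ⊕ Fin 5 ⊕ Fin 5
  src := fun e => match e with
    | Sum.inl i => (i, false)
    | Sum.inr (Sum.inl i) => (i, false)
    | Sum.inr (Sum.inr i) => (i, true)
  tgt := fun e => match e with
    | Sum.inl i => (i + 1, false)
    | Sum.inr (Sum.inl i) => (i, true)
    | Sum.inr (Sum.inr i) => (i + 2, true)

/-!
Deleting edges of a subdivision of `D` leaves it connected exactly when each chain loses at most one
edge and `D` stays connected after deleting the chains that lose one. The number of `i`-edge sets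
that do not disconnect is therefore a sum of monomials in the chain lengths, one for each such set
of edges of `D`.

A graph with a bridge is improved by contracting the bridge and subdividing an edge off a spanning
tree instead. A bridgeless graph of exceedance two has an ear decomposition with three ears. The
first two form a theta graph; the ends of the third either lie on different paths of it, which gives
a weak subdivision of `K₄`, or on the same path, which gives `K₄` again or a necklace: two bands of
parallel chains joined by two further chains. Comparing monomials, a necklace is beaten by a
subdivision of `K₄` with balanced bands. If the improved graph has a bridge, improve it again.

A bridgeless connected graph has `d₀ = d₁ = 0`, and deleting four or more edges disconnects every
graph of exceedance two, so only `d₂` and `d₃` matter for the reliability.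
-/

namespace Multigraph

variable {G H : Multigraph}

/-! ### Connectivity and spanning trees -/

/-- The edge `e` has endpoints `u` and `v`, in either order. -/
def Joins (G : Multigraph) (e : G.E) (u v : G.V) : Prop :=
  s(G.src e, G.tgt e) = s(u, v)

theorem Joins.symm {e : G.E} {u v : G.V} (h : G.Joins e u v) : G.Joins e v u :=
  h.trans Sym2.eq_swap

theorem stepOn_iff_exists_joins {S : Finset G.E} {u v : G.V} :
    G.stepOn S u v ↔ ∃ e ∈ S, G.Joins e u v := by
  simp only [stepOn, Joins, Sym2.eq_iff]

theorem ConnOn.eq_of_forall_mem {S : Finset G.E} (hS : G.ConnOn S) {α : Type*} {χ : G.V → α}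
    (hχ : ∀ e ∈ S, χ (G.src e) = χ (G.tgt e)) (u v : G.V) : χ u = χ v := by
  induction hS u v with
  | refl => rfl
  | tail _ hstep ih =>
    obtain ⟨e, he, ⟨rfl, rfl⟩ | ⟨rfl, rfl⟩⟩ := hstep
    · exact ih.trans (hχ e he)
    · exact ih.trans (hχ e he).symm

theorem connOn_iff_forall_coloring {S : Finset G.E} :
    G.ConnOn S ↔
      ∀ χ : G.V → Bool, (∀ e ∈ S, χ (G.src e) = χ (G.tgt e)) → ∀ u v, χ u = χ v := by
  refine ⟨fun hS χ hχ => hS.eq_of_forall_mem hχ, fun h u v => ?_⟩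
  have hχ : ∀ e ∈ S, decide (Relation.ReflTransGen (G.stepOn S) u (G.src e)) =
      decide (Relation.ReflTransGen (G.stepOn S) u (G.tgt e)) := fun e he =>
    decide_eq_decide.2 ⟨fun hu => hu.tail ⟨e, he, Or.inl ⟨rfl, rfl⟩⟩,
      fun hu => hu.tail ⟨e, he, Or.inr ⟨rfl, rfl⟩⟩⟩
  exact (decide_eq_decide.1 (h (fun x => decide (Relation.ReflTransGen (G.stepOn S) u x)) hχ u v)).1
    Relation.ReflTransGen.refl

theorem ConnOn.mono {S T : Finset G.E} (hS : G.ConnOn S) (hST : S ⊆ T) : G.ConnOn T :=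
  fun u v => Relation.ReflTransGen.mono (fun _ _ ⟨e, he, hends⟩ => ⟨e, hST he, hends⟩) _ _ (hS u v)

/-- The simple graph underlying the spanning subgraph with edge set `S`. -/
def simpleGraphOn (G : Multigraph) (S : Finset G.E) : SimpleGraph G.V :=
  SimpleGraph.fromRel (G.stepOn S)

theorem exists_joins_of_simpleGraphOn_adj {S : Finset G.E} {u v : G.V}
    (h : (G.simpleGraphOn S).Adj u v) : ∃ e ∈ S, G.Joins e u v := by
  rcases h.2 with h | h
  · exact stepOn_iff_exists_joins.1 h
  · obtain ⟨e, he, hvu⟩ := stepOn_iff_exists_joins.1 h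
    exact ⟨e, he, hvu.symm⟩

theorem ConnOn.preconnected_simpleGraphOn {S : Finset G.E} (hS : G.ConnOn S) :
    (G.simpleGraphOn S).Preconnected := fun u v => by
  induction hS u v with
  | refl => exact SimpleGraph.Reachable.refl _
  | @tail a b _ hstep ih =>
    by_cases hab : a = b
    · exact hab ▸ ih
    · exact ih.trans (SimpleGraph.Adj.reachable ⟨hab, Or.inl hstep⟩)

theorem connOn_of_preconnected {S : Finset G.E} {T : SimpleGraph G.V} (hT : T.Preconnected)
    (h : ∀ u v, T.Adj u v → ∃ e ∈ S, G.Joins e u v) : G.ConnOn S := fun u v =>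
  Relation.ReflTransGen.mono (fun a b hab => stepOn_iff_exists_joins.2 (h a b hab)) _ _
    ((SimpleGraph.reachable_iff_reflTransGen u v).1 (hT u v))

theorem ConnOn.exists_spanning_tree [Nonempty G.V] {S : Finset G.E} (hS : G.ConnOn S) :
    ∃ T ⊆ S, G.ConnOn T ∧ T.card + 1 = G.nV := by
  obtain ⟨T, hTS, hT⟩ :=
    (SimpleGraph.Connected.mk hS.preconnected_simpleGraphOn).exists_isTree_le
  have hsurj : Set.SurjOn (fun e => s(G.src e, G.tgt e)) S T.edgeFinset := by
    intro s hs
    induction s with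
    | _ u v => exact exists_joins_of_simpleGraphOn_adj (hTS (by simpa using hs))
  obtain ⟨R, hRS, hinj, himage⟩ := exists_subset_injOn_image_eq_of_surjOn _ _ hsurj
  refine ⟨R, hRS, connOn_of_preconnected hT.connected.preconnected fun u v huv => ?_, ?_⟩
  · have huv : s(u, v) ∈ T.edgeFinset := by simpa using huv
    exact mem_image.1 (himage.symm ▸ huv)
  · rw [← card_image_of_injOn hinj, himage]
    exact hT.card_edgeFinset

theorem ConnOn.nV_le_card_add_one [Nonempty G.V] {S : Finset G.E} (hS : G.ConnOn S) :
    G.nV ≤ S.card + 1 := by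
  obtain ⟨T, hTS, -, hT⟩ := hS.exists_spanning_tree
  have := card_le_card hTS
  omega

/-! ### Non-disconnections and reliability -/

/-- The `i`-edge sets whose deletion leaves `G` connected. -/
def nonDisconnections (G : Multigraph) (i : ℕ) : Finset (Finset G.E) :=
  univ.filter fun F => F.card = i ∧ G.ConnOn (univ \ F)

theorem mem_nonDisconnections {i : ℕ} {F : Finset G.E} :
    F ∈ G.nonDisconnections i ↔ F.card = i ∧ G.ConnOn (univ \ F) := by
  simp only [nonDisconnections, mem_filter_univ]

/-- The number of `i`-edge sets whose deletion leaves `G` connected. It is easier to compare than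
`d i`, being a sum of monomials in the chain lengths for a subdivision. -/
def nonDisc (G : Multigraph) (i : ℕ) : ℕ :=
  (G.nonDisconnections i).card

theorem nonDisc_add_d (G : Multigraph) (i : ℕ) : G.nonDisc i + G.d i = G.nE.choose i := by
  have hsplit := card_filter_add_card_filter_not (s := powersetCard i (univ : Finset G.E))
    fun F => G.ConnOn (univ \ F)
  rw [card_powersetCard, card_univ, ← univ_filter_card_eq, filter_filter, filter_filter] at hsplit
  unfold nonDisc nonDisconnections d nE Disconnects
  convert hsplit

theorem d_lt_d_of_nonDisc_lt (hE : G.nE = H.nE) {i : ℕ} (h : G.nonDisc i < H.nonDisc i) :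
    H.d i < G.d i := by
  have hG := G.nonDisc_add_d i
  have hH := H.nonDisc_add_d i
  rw [hE] at hG
  omega

theorem nonDisc_le_of_d_eq_zero (hE : G.nE = H.nE) {i : ℕ} (h : H.d i = 0) :
    G.nonDisc i ≤ H.nonDisc i := by
  have hG := G.nonDisc_add_d i
  have hH := H.nonDisc_add_d i
  rw [hE] at hG
  omega

theorem nonDisc_eq_zero_of_nE_lt [Nonempty G.V] {i : ℕ} (hi : G.nE + 1 < G.nV + i) :
    G.nonDisc i = 0 := by
  refine card_eq_zero.2 (eq_empty_of_forall_notMem fun F hF => ?_)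
  obtain ⟨rfl, hconn⟩ := mem_nonDisconnections.1 hF
  have hle := hconn.nV_le_card_add_one
  have hcard : (univ \ F).card + F.card = G.nE := card_sdiff_add_card_eq_card (subset_univ F)
  omega

theorem Connected.d_zero (hG : G.Connected) : G.d 0 = 0 := by
  refine card_eq_zero.2 (filter_eq_empty_iff.2 ?_)
  rintro F - ⟨hF, hdisc⟩
  rw [card_eq_zero.1 hF, Disconnects, sdiff_empty] at hdisc
  exact hdisc hG

theorem Bridgeless.d_one (hG : G.Bridgeless) : G.d 1 = 0 := by
  refine card_eq_zero.2 (filter_eq_empty_iff.2 ?_)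
  rintro F - ⟨hF, hdisc⟩
  obtain ⟨e, rfl⟩ := card_eq_one.1 hF
  exact hG e hdisc

theorem rel_eq_sum_nonDisc (G : Multigraph) (p : ℝ) :
    G.rel p = ∑ i ∈ range (G.nE + 1), G.nonDisc i * (p ^ (G.nE - i) * (1 - p) ^ i) := by
  have hle (F : Finset G.E) : F.card ≤ G.nE := card_le_univ F
  have hcompl : G.rel p = ∑ F : Finset G.E, if G.ConnOn (univ \ F) then
      p ^ (G.nE - F.card) * (1 - p) ^ F.card else 0 := by
    refine Fintype.sum_equiv (compl_involutive.toPerm compl) _ _ fun S => ?_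
    have hcard : Sᶜ.card = G.nE - S.card := card_compl S
    simp only [Function.Involutive.coe_toPerm, ← compl_eq_univ_sdiff, compl_compl, hcard,
      Nat.sub_sub_self (hle S)]
  rw [hcompl, ← sum_fiberwise_of_maps_to (t := range (G.nE + 1)) (g := card)
    fun F _ => mem_range.2 (Nat.lt_succ_of_le (hle F))]
  refine sum_congr rfl fun i _ => ?_
  rw [nonDisc, nonDisconnections, ← sum_filter, filter_filter, ← nsmul_eq_mul, ← sum_const]
  refine sum_congr rfl fun F hF => ?_
  rw [(mem_filter.1 hF).2.1]

theorem rel_lt_rel (hE : G.nE = H.nE) (hle : ∀ i, G.nonDisc i ≤ H.nonDisc i) {j : ℕ}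
    (hj : G.nonDisc j < H.nonDisc j) {p : ℝ} (hp0 : 0 < p) (hp1 : p < 1) : G.rel p < H.rel p := by
  have hjE : j ∈ range (H.nE + 1) := by
    rw [mem_range, Nat.lt_succ_iff]
    by_contra! hlt
    have := H.nonDisc_add_d j
    rw [Nat.choose_eq_zero_of_lt hlt] at this
    omega
  have hpos (i : ℕ) : 0 < p ^ (H.nE - i) * (1 - p) ^ i :=
    mul_pos (pow_pos hp0 _) (pow_pos (sub_pos.2 hp1) _)
  rw [rel_eq_sum_nonDisc, rel_eq_sum_nonDisc, hE]
  refine sum_lt_sum (fun i _ => ?_) ⟨j, hjE, ?_⟩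
  · exact mul_le_mul_of_nonneg_right (Nat.cast_le.2 (hle i)) (hpos i).le
  · exact mul_lt_mul_of_pos_right (Nat.cast_lt.2 hj) (hpos j)

end Multigraph

/-! ### Isomorphism invariance -/

/-- The inverse isomorphism. -/
def MGIso.symm {G H : Multigraph} (φ : MGIso G H) : MGIso H G where
  vMap := φ.vMap.symm
  eMap := φ.eMap.symm
  ends_eq f := by
    have hends := φ.ends_eq (φ.eMap.symm f)
    simp only [Equiv.apply_symm_apply] at hends
    rcases hends with ⟨hs, ht⟩ | ⟨hs, ht⟩
    · exact Or.inl ⟨by rw [hs, Equiv.symm_apply_apply], by rw [ht, Equiv.symm_apply_apply]⟩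
    · exact Or.inr ⟨by rw [ht, Equiv.symm_apply_apply], by rw [hs, Equiv.symm_apply_apply]⟩

theorem MGIso.connOn_image {G H : Multigraph} (φ : MGIso G H) {S : Finset G.E}
    (hS : G.ConnOn S) : H.ConnOn (S.image φ.eMap) := by
  refine Multigraph.connOn_iff_forall_coloring.2 fun χ hχ u v => ?_
  have hpull : ∀ e ∈ S, χ (φ.vMap (G.src e)) = χ (φ.vMap (G.tgt e)) := fun e he => by
    have hcol := hχ _ (mem_image_of_mem φ.eMap he)
    rcases φ.ends_eq e with ⟨hs, ht⟩ | ⟨hs, ht⟩ <;> rw [hs, ht] at hcol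
    exacts [hcol, hcol.symm]
  simpa only [Function.comp_apply, Equiv.apply_symm_apply] using
    hS.eq_of_forall_mem (χ := χ ∘ φ.vMap) hpull (φ.vMap.symm u) (φ.vMap.symm v)

namespace Multigraph

variable {G H : Multigraph}

theorem nonDisc_le_of_iso (φ : MGIso G H) (i : ℕ) : G.nonDisc i ≤ H.nonDisc i := by
  refine card_le_card_of_injOn (image φ.eMap) (fun F hF => ?_)
    (image_injective φ.eMap.injective).injOn
  obtain ⟨rfl, hconn⟩ := mem_nonDisconnections.1 hF
  refine mem_nonDisconnections.2 ⟨card_image_of_injective F φ.eMap.injective, ?_⟩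
  rw [← image_univ_equiv φ.eMap, ← image_sdiff _ _ φ.eMap.injective]
  exact φ.connOn_image hconn

theorem nonDisc_eq_of_isIso (h : IsIso G H) (i : ℕ) : G.nonDisc i = H.nonDisc i :=
  h.elim fun φ => (nonDisc_le_of_iso φ i).antisymm (nonDisc_le_of_iso φ.symm i)

theorem nE_eq_of_isIso (h : IsIso G H) : G.nE = H.nE :=
  h.elim fun φ => Fintype.card_congr φ.eMap

theorem nV_eq_of_isIso (h : IsIso G H) : G.nV = H.nV :=
  h.elim fun φ => Fintype.card_congr φ.vMap

/-! ### Moving a bridge -/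

theorem IsBridge.mem_of_connOn {e : G.E} (he : G.IsBridge e) {S : Finset G.E} (hS : G.ConnOn S) :
    e ∈ S := by
  by_contra heS
  exact he (hS.mono (subset_sdiff.2 ⟨subset_univ S, disjoint_singleton_right.2 heS⟩))

/-- Contract `e = st` onto `s`, and reuse `e` and the freed vertex `t` to subdivide the edge `a`.
Applied to a bridge `e`, this keeps every connected spanning subgraph connected. -/
def moveBridge (G : Multigraph) (e a : G.E) : Multigraph :=
  let merge (z : G.V) : G.V := if z = G.tgt e then G.src e else z
  { V := G.V
    E := G.E
    src := fun f => if f = e then G.tgt e else merge (G.src f)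
    tgt := fun f => if f = e then merge (G.tgt a) else
      if f = a then G.tgt e else merge (G.tgt f) }

theorem ConnOn.moveBridge {e a : G.E} (hae : a ≠ e) {S S' : Finset G.E} (hS : G.ConnOn S)
    (hSS' : ∀ f ∈ S, f ≠ e → f ∈ S') (heS' : a ∈ S → e ∈ S') (hfreed : a ∈ S' ∨ e ∈ S') :
    (G.moveBridge e a).ConnOn S' := by
  refine connOn_iff_forall_coloring.2 fun (χ : G.V → Bool) hχ => ?_
  set merge : G.V → G.V := fun z => if z = G.tgt e then G.src e else z with hmerge
  have hχe : e ∈ S' → χ (G.tgt e) = χ (merge (G.tgt a)) := fun he => by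
    simpa [Multigraph.moveBridge] using hχ e he
  have hχa : a ∈ S' → χ (merge (G.src a)) = χ (G.tgt e) := fun ha => by
    simpa [Multigraph.moveBridge, hae] using hχ a ha
  have hconst : ∀ u v, χ (merge u) = χ (merge v) := by
    refine hS.eq_of_forall_mem (χ := χ ∘ merge) fun f hf => ?_
    by_cases hfe : f = e
    · simp [hmerge, hfe]
    by_cases hfa : f = a
    · subst hfa
      exact (hχa (hSS' f hf hfe)).trans (hχe (heS' hf))
    · simpa [Multigraph.moveBridge, hfe, hfa] using hχ f (hSS' f hf hfe)
  have hfreed' : ∃ y, χ (G.tgt e) = χ (merge y) :=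
    hfreed.elim (fun ha => ⟨_, (hχa ha).symm⟩) fun he => ⟨_, hχe he⟩
  have hrep : ∀ u, ∃ y, χ u = χ (merge y) := fun u => by
    by_cases hu : u = G.tgt e
    · exact hu ▸ hfreed'
    · exact ⟨u, by simp [hmerge, hu]⟩
  intro u v
  obtain ⟨x, hx⟩ := hrep u
  obtain ⟨y, hy⟩ := hrep v
  rw [hx, hy, hconst x y]

theorem exists_nonDisc_lt_of_not_bridgeless (hG : G.Connected) (hb : ¬ G.Bridgeless)
    (hVE : G.nV ≤ G.nE) :
    ∃ H : Multigraph, H.nV = G.nV ∧ H.nE = G.nE ∧ H.Connected ∧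
      ∀ i, 1 ≤ i → G.nV + i ≤ G.nE + 1 → G.nonDisc i < H.nonDisc i := by
  obtain ⟨e, he⟩ : ∃ e, G.IsBridge e := by simpa [Bridgeless] using hb
  have : Nonempty G.V := ⟨G.src e⟩
  obtain ⟨T, -, hT, hTcard⟩ := hG.exists_spanning_tree
  have heT : e ∈ T := he.mem_of_connOn hT
  have hTE : T.card < Fintype.card G.E := by unfold nE at hVE; omega
  obtain ⟨a, haT⟩ : ∃ a, a ∉ T := by
    by_contra! hall
    exact hTE.ne (card_eq_iff_eq_univ T |>.2 (eq_univ_of_forall hall))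
  have hae : a ≠ e := fun h => haT (h ▸ heT)
  have hkeep : ∀ S, G.ConnOn S → (G.moveBridge e a).ConnOn S := fun S hS =>
    hS.moveBridge hae (fun _ hf _ => hf) (fun _ => he.mem_of_connOn hS)
      (Or.inr (he.mem_of_connOn hS))
  refine ⟨G.moveBridge e a, rfl, rfl, hkeep _ hG, fun i hi hiE => card_lt_card ?_⟩
  have hcard : i ≤ (insert e (Tᶜ.erase a)).card := by
    rw [card_insert_of_notMem (by simp [heT]), card_erase_of_mem (by simpa using haT),
      card_compl]
    unfold nE at hiE
    omega
  obtain ⟨F, heF, hFT, rfl⟩ := exists_subsuperset_card_eq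
    (singleton_subset_iff.2 (mem_insert_self e _)) (by simpa using hi) hcard
  refine (ssubset_iff_of_subset fun F' hF' => ?_).2 ⟨F, ?_, fun hF => ?_⟩
  · obtain ⟨hcard', hconn⟩ := mem_nonDisconnections.1 hF'
    exact mem_nonDisconnections.2 ⟨hcard', hkeep _ hconn⟩
  · refine mem_nonDisconnections.2 ⟨rfl, ?_⟩
    have hdisj : ∀ f ∈ F, f = e ∨ f ≠ a ∧ f ∉ T := by simpa [subset_iff] using hFT
    refine hT.moveBridge hae (fun f hf hfe => ?_) (fun ha => absurd ha haT) (Or.inl ?_)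
    · exact mem_sdiff.2 ⟨mem_univ f, fun hfF => (hdisj f hfF).elim hfe fun h => h.2 hf⟩
    · exact mem_sdiff.2 ⟨mem_univ a, fun haF => (hdisj a haF).elim hae fun h => h.1 rfl⟩
  · have heF' := he.mem_of_connOn (mem_nonDisconnections.1 hF).2
    exact (mem_sdiff.1 heF').2 (singleton_subset_iff.1 heF)

end Multigraph

namespace Multigraph

/-! ### Subdivisions -/

section Subdivide

variable {D : Multigraph} {w : D.E → ℕ}

/-- The node of the subdivision at the vertex `v` of `D`. -/
def branchNode (D : Multigraph) (w : D.E → ℕ) (v : D.V) : (subdivide D w).V :=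
  Sum.inl (Quot.mk _ v)

/-- The `k`-th edge of the chain replacing `e`. -/
def chainEdge (e : D.E) (k : Fin (w e)) : (subdivide D w).E :=
  ⟨e, k⟩

/-- The edge of `D` whose chain contains `f`. -/
def chainOf (f : (subdivide D w).E) : D.E :=
  Sigma.fst f

theorem chainNode_zero (e : D.E) : chainNode D w e 0 = branchNode D w (D.src e) := by
  simp [chainNode, branchNode]

theorem chainNode_length (e : D.E) : chainNode D w e (w e) = branchNode D w (D.tgt e) := by
  by_cases he : w e = 0
  · rw [he, chainNode_zero]
    exact congrArg Sum.inl (Quot.sound ⟨e, he, rfl, rfl⟩)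
  · simp [chainNode, branchNode, he]

theorem chainNode_succ (e : D.E) (k : Fin (w e - 1)) :
    chainNode D w e (k + 1) = Sum.inr ⟨e, k⟩ := by
  have hk : (k : ℕ) + 1 < w e := Nat.add_lt_of_lt_sub k.2
  simp [chainNode, hk]

theorem node_cases {P : (subdivide D w).V → Prop} (hbranch : ∀ v, P (branchNode D w v))
    (hchain : ∀ e k, k ≤ w e → P (chainNode D w e k)) : ∀ x, P x := by
  rintro (q | ⟨e, k⟩)
  · exact Quot.ind (β := fun q => P (Sum.inl q)) hbranch q
  · exact chainNode_succ e k ▸ hchain e (k + 1) (Nat.add_lt_of_lt_sub k.2).le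

/-- The function on the nodes of the subdivision given by `b` on the vertices of `D` and by `g e`
along the chain of `e`. -/
def nodeLift {α : Type*} (b : D.V → α) (g : D.E → ℕ → α) (hsrc : ∀ e, g e 0 = b (D.src e))
    (htgt : ∀ e, g e (w e) = b (D.tgt e)) : (subdivide D w).V → α :=
  Sum.elim
    (Quot.lift b fun _ _ ⟨e, he, hu, hv⟩ => by rw [← hu, ← hv, ← hsrc, ← htgt, he])
    fun x => g x.1 (x.2 + 1)

theorem nodeLift_chainNode {α : Type*} {b : D.V → α} {g : D.E → ℕ → α}
    {hsrc : ∀ e, g e 0 = b (D.src e)} {htgt : ∀ e, g e (w e) = b (D.tgt e)} {e : D.E} {k : ℕ}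
    (hk : k ≤ w e) : nodeLift b g hsrc htgt (chainNode D w e k) = g e k := by
  obtain rfl | hk0 := Nat.eq_zero_or_pos k
  · rw [chainNode_zero, hsrc]
    rfl
  obtain rfl | hkw := hk.eq_or_lt
  · rw [chainNode_length, htgt]
    rfl
  · obtain ⟨k, rfl⟩ := Nat.exists_eq_add_one.2 hk0
    rw [chainNode_succ e ⟨k, Nat.lt_sub_of_add_lt hkw⟩]
    rfl

theorem chainNode_coloring_eq {α : Type*} {F : Finset (subdivide D w).E}
    {χ : (subdivide D w).V → α}
    (hχ : ∀ f ∈ univ \ F, χ ((subdivide D w).src f) = χ ((subdivide D w).tgt f)) {e : D.E}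
    {a b : ℕ} (hab : a ≤ b) (hb : b ≤ w e)
    (hF : ∀ k : Fin (w e), a ≤ k → k < b → chainEdge e k ∉ F) :
    χ (chainNode D w e a) = χ (chainNode D w e b) := by
  induction b, hab using Nat.le_induction with
  | base => rfl
  | succ b hab ih =>
    rw [ih (by omega) fun k hak hkb => hF k hak (by omega)]
    exact hχ (chainEdge e ⟨b, hb⟩) (mem_sdiff.2 ⟨mem_univ _, hF ⟨b, hb⟩ hab b.lt_succ_self⟩)

/-- Two deleted edges of one chain cut off the nodes between them. -/
theorem injOn_chainOf_of_connOn {F : Finset (subdivide D w).E}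
    (hconn : (subdivide D w).ConnOn (univ \ F)) :
    Set.InjOn chainOf (F : Set (subdivide D w).E) := by
  have hlt : ∀ (e : D.E) (i j : Fin (w e)), chainEdge e i ∈ F → chainEdge e j ∈ F → ¬ i < j := by
    intro e i j hi hj hij
    let χ : (subdivide D w).V → Prop :=
      nodeLift (fun _ => False) (fun f k => f = e ∧ i.val < k ∧ k ≤ j.val) (by simp) fun f => by
        simp only [eq_iff_iff, iff_false, not_and, not_le]
        rintro rfl -
        exact j.2
    have hχ : ∀ f ∈ univ \ F, χ ((subdivide D w).src f) = χ ((subdivide D w).tgt f) := by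
      rintro ⟨f, k⟩ hf
      refine (nodeLift_chainNode k.2.le).trans (Eq.trans ?_ (nodeLift_chainNode k.2).symm)
      have hk : f = e → (k : ℕ) ≠ i ∧ (k : ℕ) ≠ j := by
        rintro rfl
        constructor <;> intro hk <;> obtain rfl := Fin.ext hk
        exacts [(mem_sdiff.1 hf).2 hi, (mem_sdiff.1 hf).2 hj]
      refine propext (and_congr_right fun hfe => ?_)
      have := hk hfe
      omega
    have hmid : χ (chainNode D w e (i + 1)) :=
      (nodeLift_chainNode i.2).mpr ⟨rfl, Nat.lt_succ_self _, hij⟩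
    exact (hconn.eq_of_forall_mem hχ _ (branchNode D w (D.src e))).mp hmid
  rintro ⟨e, i⟩ hi ⟨e', j⟩ hj (rfl : e = e')
  obtain rfl : i = j := le_antisymm (not_lt.1 (hlt e j i hj hi)) (not_lt.1 (hlt e i j hi hj))
  rfl

theorem connOn_of_connOn_subdivide {F : Finset (subdivide D w).E}
    (hconn : (subdivide D w).ConnOn (univ \ F)) : D.ConnOn (univ \ F.image chainOf) := by
  refine connOn_iff_forall_coloring.2 fun χ hχ u v => ?_
  let χ' : (subdivide D w).V → Bool := nodeLift χ
    (fun e k => if ∃ i : Fin (w e), chainEdge e i ∈ F ∧ i < k then χ (D.tgt e) else χ (D.src e))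
    (by simp) fun e => by
      split_ifs with he
      · rfl
      · refine hχ e (mem_sdiff.2 ⟨mem_univ e, fun heF => he ?_⟩)
        obtain ⟨⟨e, k⟩, hk, rfl⟩ := mem_image.1 heF
        exact ⟨k, hk, k.2⟩
  refine hconn.eq_of_forall_mem (χ := χ') ?_ (branchNode D w u) (branchNode D w v)
  rintro ⟨f, k⟩ hf
  refine (nodeLift_chainNode k.2.le).trans (Eq.trans ?_ (nodeLift_chainNode k.2).symm)
  refine if_congr (exists_congr fun i => and_congr_right fun hi => ?_) rfl rfl
  have hik : (i : ℕ) ≠ k := fun h => (mem_sdiff.1 hf).2 (Fin.ext h ▸ hi)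
  omega

theorem connOn_subdivide_of_connOn {F : Finset (subdivide D w).E}
    (hinj : Set.InjOn chainOf (F : Set (subdivide D w).E))
    (hconn : D.ConnOn (univ \ F.image chainOf)) : (subdivide D w).ConnOn (univ \ F) := by
  refine connOn_iff_forall_coloring.2 fun χ hχ => ?_
  have hbranch : ∀ u v, χ (branchNode D w u) = χ (branchNode D w v) := by
    refine hconn.eq_of_forall_mem fun e he => ?_
    rw [← chainNode_zero, ← chainNode_length]
    exact chainNode_coloring_eq hχ (Nat.zero_le _) le_rfl fun k _ _ hk =>
      (mem_sdiff.1 he).2 (mem_image_of_mem chainOf hk)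
  have hrep : ∀ x, ∃ v, χ x = χ (branchNode D w v) := by
    refine node_cases (fun v => ⟨v, rfl⟩) fun e k hk => ?_
    by_cases hcut : ∃ i : Fin (w e), chainEdge e i ∈ F ∧ i < k
    · obtain ⟨i, hi, hik⟩ := hcut
      refine ⟨D.tgt e, chainNode_length (w := w) e ▸ chainNode_coloring_eq hχ hk le_rfl ?_⟩
      intro j hkj _ hj
      obtain rfl : i = j := eq_of_heq (Sigma.mk.inj (hinj hi hj rfl)).2
      omega
    · refine ⟨D.src e,
        chainNode_zero (w := w) e ▸ (chainNode_coloring_eq hχ (Nat.zero_le k) hk ?_).symm⟩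
      exact fun j _ hjk hj => hcut ⟨j, hj, hjk⟩
  intro x y
  obtain ⟨u, hu⟩ := hrep x
  obtain ⟨v, hv⟩ := hrep y
  rw [hu, hv, hbranch u v]

theorem connOn_subdivide_iff {F : Finset (subdivide D w).E} :
    (subdivide D w).ConnOn (univ \ F) ↔
      Set.InjOn chainOf (F : Set (subdivide D w).E) ∧ D.ConnOn (univ \ F.image chainOf) :=
  ⟨fun h => ⟨injOn_chainOf_of_connOn h, connOn_of_connOn_subdivide h⟩,
    fun h => connOn_subdivide_of_connOn h.1 h.2⟩

theorem Connected.subdivide (hD : D.Connected) (w : D.E → ℕ) : (subdivide D w).Connected := by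
  have hconn : (_root_.subdivide D w).ConnOn (univ \ ∅) :=
    connOn_subdivide_of_connOn (by simp) (by simpa [Connected] using hD)
  rwa [sdiff_empty] at hconn

theorem card_transversals (w : D.E → ℕ) (T : Finset D.E) :
    (univ.filter fun F : Finset (subdivide D w).E =>
      Set.InjOn chainOf (F : Set (subdivide D w).E) ∧ F.image chainOf = T).card =
        ∏ t ∈ T, w t := by
  have hpi : (T.pi fun t => (univ : Finset (Fin (w t)))).card = ∏ t ∈ T, w t := by simp
  rw [← hpi]
  symm
  refine card_bij (fun c _ => T.attach.image fun t => chainEdge t.1 (c t.1 t.2)) ?_ ?_ ?_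
  · intro c _
    simp only [mem_filter_univ]
    refine ⟨?_, by rw [image_image]; exact attach_image_val⟩
    simp only [coe_image, Set.InjOn, Set.forall_mem_image]
    rintro ⟨s, hs⟩ - ⟨t, ht⟩ - (rfl : s = t)
    rfl
  · intro c _ c' _ hcc'
    funext t ht
    have hmem : chainEdge t (c t ht) ∈ T.attach.image fun t => chainEdge t.1 (c' t.1 t.2) :=
      hcc' ▸ mem_image_of_mem _ (mem_attach T ⟨t, ht⟩)
    obtain ⟨⟨s, hs⟩, -, hst⟩ := mem_image.1 hmem
    obtain ⟨rfl, heq⟩ := Sigma.mk.inj hst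
    exact (eq_of_heq heq).symm
  · intro F hF
    obtain ⟨hinj, rfl⟩ := (mem_filter_univ F).1 hF
    have hex : ∀ t ∈ F.image chainOf, ∃ k : Fin (w t), chainEdge t k ∈ F := by
      simp only [forall_mem_image]
      exact fun f hf => ⟨f.2, hf⟩
    choose c hc using hex
    refine ⟨c, by simp, ?_⟩
    ext f
    simp only [mem_image, mem_attach, true_and, Subtype.exists]
    constructor
    · rintro ⟨t, ht, rfl⟩
      exact hc t _
    · intro hf
      exact ⟨chainOf f, ⟨f, hf, rfl⟩, hinj (hc _ _) hf rfl⟩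

theorem nonDisc_subdivide (w : D.E → ℕ) (i : ℕ) :
    (subdivide D w).nonDisc i = ∑ T ∈ D.nonDisconnections i, ∏ t ∈ T, w t := by
  rw [nonDisc, card_eq_sum_card_fiberwise (f := image chainOf) (t := D.nonDisconnections i)]
  · refine sum_congr rfl fun T hT => ?_
    obtain ⟨hcard, hconn⟩ := mem_nonDisconnections.1 hT
    rw [← card_transversals]
    congr 1
    ext F
    simp only [mem_filter, mem_univ, true_and, mem_nonDisconnections, connOn_subdivide_iff]
    constructor
    · exact fun ⟨⟨_, hinj, _⟩, hT⟩ => ⟨hinj, hT⟩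
    · rintro ⟨hinj, rfl⟩
      exact ⟨⟨by rwa [card_image_of_injOn hinj] at hcard, hinj, hconn⟩, rfl⟩
  · intro F hF
    obtain ⟨rfl, hconn⟩ := mem_nonDisconnections.1 hF
    obtain ⟨hinj, hconn⟩ := connOn_subdivide_iff.1 hconn
    exact mem_nonDisconnections.2 ⟨card_image_of_injOn hinj, hconn⟩

theorem nE_subdivide (w : D.E → ℕ) : (subdivide D w).nE = ∑ e, w e := by
  change Fintype.card (Σ e, Fin (w e)) = _
  simp

theorem nV_subdivide (hw : ZeroAcyclic D w) :
    (subdivide D w).nV + D.nE = D.nV + ∑ e, w e := by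
  have hcard : (subdivide D w).nV = Fintype.card (Quot (zeroRel D w)) + ∑ e, (w e - 1) := by
    change Fintype.card (Quot (zeroRel D w) ⊕ Σ e, Fin (w e - 1)) = _
    simp
  have hsum : ∑ e, (w e - 1) + D.nE = (univ.filter fun e => w e = 0).card + ∑ e, w e := by
    rw [nE, ← card_univ, card_eq_sum_ones, card_filter, ← sum_add_distrib, ← sum_add_distrib]
    refine sum_congr rfl fun e _ => ?_
    split_ifs <;> omega
  unfold ZeroAcyclic at hw
  rw [hcard, add_assoc, hsum, ← add_assoc, hw, nV]

end Subdivide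

end Multigraph

namespace Multigraph

/-! ### Weak subdivisions from positive cotrees -/

section Cotree

variable {D : Multigraph} {w : D.E → ℕ}

/-- `D` with the endpoints of each zero-weight edge identified; all edges are kept, those of weight
zero as loops. -/
def contractZero (D : Multigraph) (w : D.E → ℕ) : Multigraph where
  V := Quot (zeroRel D w)
  E := D.E
  src e := Quot.mk _ (D.src e)
  tgt e := Quot.mk _ (D.tgt e)

theorem connOn_contractZero_iff {S : Finset D.E} :
    (contractZero D w).ConnOn S ↔ D.ConnOn (S ∪ univ.filter fun e => w e = 0) := by
  refine (connOn_iff_forall_coloring (G := contractZero D w) (S := S)).trans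
    (Iff.trans ⟨fun h χ hχ u v => ?_, fun h χ hχ => ?_⟩ connOn_iff_forall_coloring.symm)
  · refine h (Quot.lift χ ?_) (fun e he => hχ e (mem_union_left _ he)) (Quot.mk _ u) (Quot.mk _ v)
    rintro _ _ ⟨e, he, rfl, rfl⟩
    exact hχ e (mem_union_right S ((mem_filter_univ e).2 he))
  · have hpull : ∀ u v, χ (Quot.mk _ u) = χ (Quot.mk _ v) := by
      refine h (fun v => χ (Quot.mk _ v)) fun e he => ?_
      rcases mem_union.1 he with heS | he0
      · exact hχ e heS
      · exact congrArg χ (Quot.sound ⟨e, (mem_filter_univ e).1 he0, rfl, rfl⟩)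
    exact fun u v => Quot.induction_on₂ u v hpull

/-- `w` is positive on the complement of some spanning tree of `D`. -/
def HasPositiveCotree (D : Multigraph) (w : D.E → ℕ) : Prop :=
  ∃ F : Finset D.E, D.ConnOn (univ \ F) ∧ F.card + D.nV = D.nE + 1 ∧ ∀ e ∈ F, w e ≠ 0

theorem HasPositiveCotree.zeroAcyclic [Nonempty D.V] (hw : D.HasPositiveCotree w) :
    ZeroAcyclic D w := by
  obtain ⟨F, hF, hcard, hpos⟩ := hw
  let Z := univ.filter fun e => w e = 0
  have : Nonempty (contractZero D w).V := Nonempty.map (Quot.mk _) ‹Nonempty D.V›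
  have hZF : Z ⊆ univ \ F := fun e he =>
    mem_sdiff.2 ⟨mem_univ e, fun heF => hpos e heF ((mem_filter_univ e).1 he)⟩
  have hlower : D.nV ≤ (contractZero D w).nV + Z.card := by
    obtain ⟨T, -, hT, hTcard⟩ :=
      (connOn_contractZero_iff.2 (hF.mono (subset_union_left (s₂ := Z)))).exists_spanning_tree
    have hle : D.nV ≤ (T ∪ Z).card + 1 := (connOn_contractZero_iff.1 hT).nV_le_card_add_one
    have hunion : (T ∪ Z).card ≤ T.card + Z.card := card_union_le T Z
    exact hTcard ▸ hle.trans (by omega)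
  have hupper : (contractZero D w).nV + Z.card ≤ D.nV := by
    have hle : (contractZero D w).nV ≤ ((univ \ F) \ Z).card + 1 :=
      ConnOn.nV_le_card_add_one
        (connOn_contractZero_iff.2 (by rwa [sdiff_union_of_subset hZF]))
    have hZ := card_sdiff_add_card_eq_card hZF
    have hF' : (univ \ F).card + F.card = D.nE := card_sdiff_add_card_eq_card (subset_univ F)
    omega
  exact hupper.antisymm hlower

theorem HasPositiveCotree.connected {w : D.E → ℕ} (hw : D.HasPositiveCotree w) : D.Connected :=
  let ⟨_, hF, _⟩ := hw
  hF.mono (subset_univ _)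

theorem HasPositiveCotree.ofIso {D' : Multigraph} (φ : MGIso D D') {w' : D'.E → ℕ}
    (hww' : ∀ e, w' (φ.eMap e) = w e) (hw : D.HasPositiveCotree w) : D'.HasPositiveCotree w' := by
  obtain ⟨F, hF, hcard, hpos⟩ := hw
  refine ⟨F.image φ.eMap, ?_, ?_, forall_mem_image.2 fun e he => hww' e ▸ hpos e he⟩
  · rw [← image_univ_equiv φ.eMap, ← image_sdiff _ _ φ.eMap.injective]
    exact φ.connOn_image hF
  · rwa [card_image_of_injective F φ.eMap.injective, ← nV_eq_of_isIso ⟨φ⟩, ← nE_eq_of_isIso ⟨φ⟩]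

end Cotree

/-! ### Walks and chain decompositions -/

section Walk

variable {G : Multigraph}

/-- The list of edges `l` is traversed by a walk from the first vertex to the second. -/
inductive IsWalk (G : Multigraph) : G.V → G.V → List G.E → Prop
  | nil (u : G.V) : IsWalk G u u []
  | cons {u v x : G.V} {e : G.E} {l : List G.E} (he : G.Joins e u v) (hl : IsWalk G v x l) :
      IsWalk G u x (e :: l)

/-- The endpoints of the edges in the list `l`. -/
def ends (G : Multigraph) (l : List G.E) : Finset G.V :=
  univ.filter fun v => ∃ e ∈ l, ∃ u, G.Joins e v u

theorem mem_ends {l : List G.E} {v : G.V} : v ∈ G.ends l ↔ ∃ e ∈ l, ∃ u, G.Joins e v u :=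
  mem_filter_univ v

theorem ends_append (l l' : List G.E) : G.ends (l ++ l') = G.ends l ∪ G.ends l' := by
  ext v
  simp only [mem_ends, mem_union, List.mem_append, or_and_right, exists_or]

theorem ends_nil : G.ends [] = ∅ := by
  ext v
  simp [mem_ends]

theorem Joins.ends_cons {e : G.E} {u v : G.V} (he : G.Joins e u v) (l : List G.E) :
    G.ends (e :: l) = {u, v} ∪ G.ends l := by
  ext x
  have hx : (∃ y, G.Joins e x y) ↔ x = u ∨ x = v := by
    unfold Joins at he ⊢
    rw [he, ← Sym2.mem_iff, Sym2.mem_iff_exists]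
  simp [mem_ends, hx, or_assoc]

theorem ends_reverse (l : List G.E) : G.ends l.reverse = G.ends l := by
  ext v
  simp only [mem_ends, List.mem_reverse]

theorem ConnOn.eq_or_exists_joins {S : Finset G.E} (hS : G.ConnOn S) (u v : G.V) :
    v = u ∨ ∃ e ∈ S, ∃ x, G.Joins e v x := by
  rcases (hS u v).cases_tail with h | ⟨x, -, hx⟩
  · exact Or.inl h
  · obtain ⟨e, he, hxv⟩ := stepOn_iff_exists_joins.1 hx
    exact Or.inr ⟨e, he, x, hxv.symm⟩

/-- The vertices of the subgraph with root `p` and edges `L`. -/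
def verts (p : G.V) (L : List G.E) : Finset G.V :=
  insert p (G.ends L)

theorem verts_append (p : G.V) (l L : List G.E) : verts p (l ++ L) = verts p L ∪ G.ends l := by
  rw [verts, ends_append, union_comm, ← insert_union, verts]

variable {u v x : G.V} {l l' : List G.E}

theorem IsWalk.eq_of_nil (h : G.IsWalk u v []) : u = v := by
  cases h
  rfl

theorem IsWalk.append (h : G.IsWalk u v l) (h' : G.IsWalk v x l') : G.IsWalk u x (l ++ l') := by
  induction h with
  | nil => exact h'
  | cons he _ ih => exact (ih h').cons he

theorem IsWalk.reverse (h : G.IsWalk u v l) : G.IsWalk v u l.reverse := by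
  induction h with
  | nil u => exact IsWalk.nil u
  | cons he _ ih =>
    rw [List.reverse_cons]
    exact ih.append ((IsWalk.nil _).cons he.symm)

theorem IsWalk.right_mem (h : G.IsWalk u v l) : v ∈ verts u l := by
  induction h with
  | nil u => exact mem_insert_self u _
  | cons he _ ih =>
    rw [verts, he.ends_cons]
    simp only [verts, mem_insert, mem_union, mem_singleton] at ih ⊢
    tauto

theorem IsWalk.verts_eq_ends (h : G.IsWalk u v l) (hl : l ≠ []) : verts u l = G.ends l := by
  cases h with
  | nil => exact absurd rfl hl
  | cons he _ => exact insert_eq_of_mem (mem_ends.2 ⟨_, List.mem_cons_self, _, he⟩)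

theorem IsWalk.exists_split (h : G.IsWalk u v l) (hx : x ∈ verts u l) :
    ∃ l₁ l₂, l = l₁ ++ l₂ ∧ G.IsWalk u x l₁ ∧ G.IsWalk x v l₂ := by
  induction h with
  | nil u =>
    obtain rfl : x = u := by simpa [verts, ends_nil] using hx
    exact ⟨[], [], rfl, IsWalk.nil x, IsWalk.nil x⟩
  | @cons u y v e l he hl ih =>
    by_cases hxu : x = u
    · exact ⟨[], e :: l, rfl, hxu ▸ IsWalk.nil u, hxu ▸ hl.cons he⟩
    · have hxy : x ∈ verts y l := by
        rw [verts, he.ends_cons] at hx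
        simpa [verts, hxu] using hx
      obtain ⟨l₁, l₂, rfl, h₁, h₂⟩ := ih hxy
      exact ⟨e :: l₁, l₂, rfl, h₁.cons he, h₂⟩

theorem IsWalk.exists_nodes (h : G.IsWalk u v l) :
    ∃ f : ℕ → G.V, f 0 = u ∧ f l.length = v ∧
      ∀ i (hi : i < l.length), G.Joins l[i] (f i) (f (i + 1)) := by
  induction h with
  | nil u => exact ⟨fun _ => u, rfl, rfl, by simp⟩
  | @cons u y v e l he hl ih =>
    obtain ⟨f, rfl, hlast, hstep⟩ := ih
    refine ⟨fun i => Nat.casesOn i u f, rfl, hlast, ?_⟩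
    rintro (_ | i) hi
    · exact he
    · exact hstep i (Nat.lt_of_succ_lt_succ hi)

end Walk

/-- A decomposition of `G` along `D`: vertices of `D` are sent to vertices of `G`, and edges of `D`
to walks of `G`, possibly empty, which together use each edge of `G` exactly once. -/
structure ChainDecomposition (G D : Multigraph) where
  node : D.V → G.V
  chain : D.E → List G.E
  isWalk : ∀ e, G.IsWalk (node (D.src e)) (node (D.tgt e)) (chain e)
  count_eq_one : ∀ f, ∑ e, (chain e).count f = 1

namespace ChainDecomposition

variable {G D : Multigraph} (C : ChainDecomposition G D)

/-- The chain lengths. -/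
def length (e : D.E) : ℕ :=
  (C.chain e).length

theorem sum_length : ∑ e, C.length e = G.nE := by
  have hlen (e : D.E) : C.length e = ∑ f, (C.chain e).count f :=
    by simpa [length] using
      (Multiset.sum_count_eq_card (m := (C.chain e : Multiset G.E)) fun f _ => mem_univ f).symm
  simp only [hlen]
  rw [sum_comm, sum_congr rfl fun f _ => C.count_eq_one f, ← card_eq_sum_ones, card_univ, nE]

theorem exists_mem_chain (f : G.E) : ∃ e, f ∈ C.chain e := by
  by_contra! hf
  simpa [List.count_eq_zero.2 (hf _)] using C.count_eq_one f

theorem isWeakSubdivision [hV : Nonempty D.V] (hG : G.Connected)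
    (hcard : G.nE + D.nV = D.nE + G.nV) (hC : D.HasPositiveCotree C.length) :
    IsWeakSubdivision G D C.length := by
  choose pos hpos0 hposlast hstep using fun e => (C.isWalk e).exists_nodes
  let vMap : (subdivide D C.length).V → G.V :=
    nodeLift C.node pos hpos0 hposlast
  let eMap : (subdivide D C.length).E → G.E := fun f => (C.chain f.1)[f.2]
  have hends : ∀ f, G.Joins (eMap f) (vMap ((subdivide D C.length).src f))
      (vMap ((subdivide D C.length).tgt f)) := by
    rintro ⟨e, k⟩
    change G.Joins _ (vMap (chainNode D C.length e k)) (vMap (chainNode D C.length e (k + 1)))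
    rw [show vMap _ = _ from nodeLift_chainNode k.2.le, show vMap _ = _ from nodeLift_chainNode k.2]
    exact hstep e k k.2
  have heMap : eMap.Surjective := fun f => by
    obtain ⟨e, he⟩ := C.exists_mem_chain f
    obtain ⟨k, hk, rfl⟩ := List.mem_iff_getElem.1 he
    exact ⟨⟨e, k, hk⟩, rfl⟩
  have hvMap : vMap.Surjective := fun v => by
    obtain ⟨d⟩ := hV
    rcases hG.eq_or_exists_joins (C.node d) v with rfl | ⟨e, -, u, hu⟩
    · exact ⟨branchNode D _ d, rfl⟩
    · obtain ⟨f, rfl⟩ := heMap e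
      rcases Sym2.eq_iff.1 ((Eq.symm hu).trans (hends f)) with ⟨hv, -⟩ | ⟨hv, -⟩
      exacts [⟨_, hv.symm⟩, ⟨_, hv.symm⟩]
  have hE : (subdivide D C.length).nE = G.nE := by rw [nE_subdivide, C.sum_length]
  have hV : (subdivide D C.length).nV = G.nV := by
    have hnV := nV_subdivide hC.zeroAcyclic
    rw [C.sum_length] at hnV
    omega
  let φ : MGIso (subdivide D C.length) G :=
    { vMap := Equiv.ofBijective vMap ((Fintype.bijective_iff_surjective_and_card _).2 ⟨hvMap, hV⟩)
      eMap := Equiv.ofBijective eMap ((Fintype.bijective_iff_surjective_and_card _).2 ⟨heMap, hE⟩)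
      ends_eq := fun f => Sym2.eq_iff.1 (hends f) }
  exact ⟨hC.zeroAcyclic, ⟨φ.symm⟩⟩

/-- Transport along an isomorphism, reversing the chains of the edges whose orientation flips. -/
def ofIso {D' : Multigraph} (φ : MGIso D D') : ChainDecomposition G D' where
  node v := C.node (φ.vMap.symm v)
  chain f :=
    let e := φ.eMap.symm f
    if D'.src f = φ.vMap (D.src e) ∧ D'.tgt f = φ.vMap (D.tgt e) then C.chain e
    else (C.chain e).reverse
  isWalk f := by
    obtain ⟨e, rfl⟩ := φ.eMap.surjective f
    simp only [Equiv.symm_apply_apply]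
    split_ifs with horient
    · rw [horient.1, horient.2, Equiv.symm_apply_apply, Equiv.symm_apply_apply]
      exact C.isWalk e
    · obtain ⟨hs, ht⟩ := (φ.ends_eq e).resolve_left horient
      rw [hs, ht, Equiv.symm_apply_apply, Equiv.symm_apply_apply]
      exact (C.isWalk e).reverse
  count_eq_one f := by
    rw [← C.count_eq_one f]
    refine Fintype.sum_equiv φ.eMap.symm _ _ fun e => ?_
    dsimp only
    split_ifs
    exacts [rfl, List.count_reverse]

theorem length_ofIso {D' : Multigraph} (φ : MGIso D D') (e : D.E) :
    (C.ofIso φ).length (φ.eMap e) = C.length e := by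
  unfold length ofIso
  simp only [Equiv.symm_apply_apply]
  split_ifs
  exacts [rfl, List.length_reverse]

end ChainDecomposition

end Multigraph

namespace Multigraph

variable {G : Multigraph}

/-! ### Ear decompositions -/

/-- The edges `l` form a path from the first vertex to the second that meets `U` only at its end. -/
inductive PathInto (G : Multigraph) (U : Finset G.V) : G.V → G.V → List G.E → Prop
  | nil {v : G.V} (hv : v ∈ U) : PathInto G U v v []
  | cons {x y v : G.V} {e : G.E} {l : List G.E} (hx : x ∉ U) (he : G.Joins e x y)
      (hl : PathInto G U y v l) (hxl : x ∉ G.ends l) : PathInto G U x v (e :: l)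

namespace PathInto

variable {U : Finset G.V} {x v : G.V} {l : List G.E}

theorem isWalk (h : G.PathInto U x v l) : G.IsWalk x v l := by
  induction h with
  | nil => exact IsWalk.nil _
  | cons _ he _ _ ih => exact ih.cons he

theorem right_mem (h : G.PathInto U x v l) : v ∈ U := by
  induction h with
  | nil hv => exact hv
  | cons _ _ _ _ ih => exact ih

theorem left_mem (h : G.PathInto U x v l) : x ∈ U ∪ G.ends l := by
  cases h with
  | nil hv => exact mem_union_left _ hv
  | cons _ he _ _ => exact mem_union_right _ (mem_ends.2 ⟨_, List.mem_cons_self, _, he⟩)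

theorem nodup (h : G.PathInto U x v l) : l.Nodup := by
  induction h with
  | nil => exact List.nodup_nil
  | cons _ he _ hxl ih => exact List.nodup_cons.2 ⟨fun hel => hxl (mem_ends.2 ⟨_, hel, _, he⟩), ih⟩

theorem exists_joins_notMem (h : G.PathInto U x v l) {e : G.E} (he : e ∈ l) :
    ∃ a ∉ U, ∃ b, G.Joins e a b := by
  induction h with
  | nil => cases he
  | cons hx hxy _ _ ih =>
    rcases List.mem_cons.1 he with rfl | he
    exacts [⟨_, hx, _, hxy⟩, ih he]

theorem card_union_ends (h : G.PathInto U x v l) :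
    (U ∪ G.ends l).card = U.card + l.length := by
  induction h with
  | nil => rw [ends_nil, union_empty, List.length_nil, Nat.add_zero]
  | @cons x y v e l hx he hl hxl ih =>
    have hinsert : U ∪ G.ends (e :: l) = insert x (U ∪ G.ends l) := by
      rw [he.ends_cons, ← insert_eq_of_mem hl.left_mem]
      ext a
      simp only [mem_union, mem_insert, mem_singleton]
      tauto
    rw [hinsert, card_insert_of_notMem (by simp [hx, hxl]), ih, List.length_cons, Nat.add_assoc]

theorem exists_suffix (h : G.PathInto U x v l) {a : G.V} (ha : a ∈ G.ends l) :
    ∃ l', l' <:+ l ∧ G.PathInto U a v l' := by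
  induction h with
  | nil => simp [ends_nil] at ha
  | @cons x y v e l hx he hl hxl ih =>
    rw [he.ends_cons, mem_union, mem_insert, mem_singleton] at ha
    rcases ha with (rfl | rfl) | ha
    · exact ⟨_, List.suffix_rfl, hl.cons hx he hxl⟩
    · exact ⟨l, List.suffix_cons e l, hl⟩
    · obtain ⟨l', hl', h⟩ := ih ha
      exact ⟨l', hl'.trans (List.suffix_cons e l), h⟩

end PathInto

theorem exists_pathInto {S : Finset G.E} {U : Finset G.V} {x v : G.V}
    (h : Relation.ReflTransGen (G.stepOn S) x v) (hv : v ∈ U) :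
    ∃ u l, G.PathInto U x u l ∧ ∀ e ∈ l, e ∈ S := by
  induction h using Relation.ReflTransGen.head_induction_on with
  | refl => exact ⟨v, [], PathInto.nil hv, by simp⟩
  | @head x y hxy _ ih =>
    obtain ⟨u, l, hl, hlS⟩ := ih
    obtain ⟨e, heS, he⟩ := stepOn_iff_exists_joins.1 hxy
    by_cases hxU : x ∈ U
    · exact ⟨x, [], PathInto.nil hxU, by simp⟩
    by_cases hxl : x ∈ G.ends l
    · obtain ⟨l', hl', h⟩ := hl.exists_suffix hxl
      exact ⟨u, l', h, fun f hf => hlS f (hl'.subset hf)⟩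
    · exact ⟨u, e :: l, hl.cons hxU he hxl, List.forall_mem_cons.2 ⟨heS, hlS⟩⟩

/-- The edges `l` form an ear with ends `u` and `v` on the subgraph with root `p` and edges `L`: a
path or cycle with only its ends in that subgraph. This is recorded by the number of vertices. -/
structure IsEar (p : G.V) (L : List G.E) (u v : G.V) (l : List G.E) : Prop where
  left_mem : u ∈ verts p L
  right_mem : v ∈ verts p L
  isWalk : G.IsWalk u v l
  ne_nil : l ≠ []
  nodup : l.Nodup
  disjoint : l.Disjoint L
  card_verts : (verts p (l ++ L)).card + 1 = (verts p L).card + l.length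

theorem Connected.exists_joins_notMem (hG : G.Connected) (p : G.V) {L : List G.E} {e : G.E}
    (he : e ∉ L) : ∃ f ∉ L, ∃ u ∈ verts p L, ∃ x, G.Joins f u x := by
  by_contra! hclosed
  have hstep (f : G.E) : G.src f ∈ verts p L ↔ G.tgt f ∈ verts p L := by
    by_cases hf : f ∈ L
    · exact iff_of_true (mem_insert_of_mem (mem_ends.2 ⟨f, hf, G.tgt f, rfl⟩))
        (mem_insert_of_mem (mem_ends.2 ⟨f, hf, G.src f, Sym2.eq_swap⟩))
    · exact iff_of_false (fun h => hclosed f hf _ h (G.tgt f) rfl)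
        (fun h => hclosed f hf _ h (G.src f) Sym2.eq_swap)
  have hsrc : (p ∈ verts p L) = (G.src e ∈ verts p L) :=
    hG.eq_of_forall_mem (χ := (· ∈ verts p L)) (fun f _ => propext (hstep f)) p (G.src e)
  exact hclosed e he _ (hsrc.mp (mem_insert_self p _)) (G.tgt e) rfl

theorem Connected.exists_isEar (hG : G.Connected) (hb : G.Bridgeless) (p : G.V) {L : List G.E}
    {e : G.E} (he : e ∉ L) : ∃ u v l, IsEar p L u v l := by
  obtain ⟨f, hfL, u, hu, x, hf⟩ := hG.exists_joins_notMem p he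
  obtain ⟨v, l, hl, hlS⟩ :=
    exists_pathInto (U := verts p L) (not_not.1 (hb f) x p) (mem_insert_self p _)
  have hfl : f ∉ l := fun h => (mem_sdiff.1 (hlS f h)).2 (mem_singleton_self f)
  have hlL : l.Disjoint L := fun g hgl hgL => by
    obtain ⟨a, ha, b, hab⟩ := hl.exists_joins_notMem hgl
    exact ha (mem_insert_of_mem (mem_ends.2 ⟨g, hgL, b, hab⟩))
  have hverts : verts p (f :: l ++ L) = verts p L ∪ G.ends l := by
    rw [verts_append, hf.ends_cons, ← union_assoc, union_right_comm]
    exact union_eq_left.2 (insert_subset (mem_union_left _ hu) (singleton_subset_iff.2 hl.left_mem))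
  exact ⟨u, v, f :: l,
    { left_mem := hu
      right_mem := hl.right_mem
      isWalk := hl.isWalk.cons hf
      ne_nil := List.cons_ne_nil f l
      nodup := List.nodup_cons.2 ⟨hfl, hl.nodup⟩
      disjoint := List.disjoint_cons_left.2 ⟨hfL, hlL⟩
      card_verts := by rw [hverts, hl.card_union_ends, List.length_cons]; rfl }⟩

/-- A sequence of ears, the latest first, each attached to the union of the previous ones and the
root `p`. -/
inductive EarSequence (p : G.V) : List (List G.E) → Prop
  | nil : EarSequence p []
  | cons {Ls : List (List G.E)} {u v : G.V} {l : List G.E} (hl : IsEar p Ls.flatten u v l)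
      (hLs : EarSequence p Ls) : EarSequence p (l :: Ls)

namespace EarSequence

variable {p : G.V} {Ls : List (List G.E)}

theorem nodup_flatten (h : EarSequence p Ls) : Ls.flatten.Nodup := by
  induction h with
  | nil => exact List.nodup_nil
  | cons hl _ ih => exact hl.nodup.append ih hl.disjoint

theorem card_verts (h : EarSequence p Ls) :
    (verts p Ls.flatten).card + Ls.length = Ls.flatten.length + 1 := by
  induction h with
  | nil => simp [verts, ends_nil]
  | cons hl _ ih =>
    have := hl.card_verts
    rw [List.flatten_cons, List.length_append, List.length_cons]
    omega

end EarSequence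

theorem Connected.exists_earSequence (hG : G.Connected) (hb : G.Bridgeless) (p : G.V) :
    ∃ Ls, EarSequence p Ls ∧ ∀ e, e ∈ Ls.flatten := by
  by_contra! hincomplete
  have hlong (n : ℕ) : ∃ Ls, EarSequence p Ls ∧ n ≤ Ls.flatten.length := by
    induction n with
    | zero => exact ⟨[], EarSequence.nil, Nat.zero_le _⟩
    | succ n ih =>
      obtain ⟨Ls, hLs, hn⟩ := ih
      obtain ⟨e, he⟩ := hincomplete Ls hLs
      obtain ⟨u, v, l, hl⟩ := hG.exists_isEar hb p he
      refine ⟨l :: Ls, hLs.cons hl, ?_⟩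
      have := List.length_pos_iff.2 hl.ne_nil
      rw [List.flatten_cons, List.length_append]
      omega
  obtain ⟨Ls, hLs, hlen⟩ := hlong (G.nE + 1)
  exact absurd hLs.nodup_flatten.length_le_card (Nat.not_le.2 hlen)

theorem EarSequence.length_add_nV {p : G.V} {Ls : List (List G.E)} (h : EarSequence p Ls)
    (hG : G.Connected) (hall : ∀ e, e ∈ Ls.flatten) : Ls.length + G.nV = G.nE + 1 := by
  have hverts : verts p Ls.flatten = univ := eq_univ_iff_forall.2 fun v => by
    rcases hG.eq_or_exists_joins p v with rfl | ⟨e, -, x, he⟩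
    exacts [mem_insert_self _ _, mem_insert_of_mem (mem_ends.2 ⟨e, hall e, x, he⟩)]
  have hlen : Ls.flatten.length = G.nE := by
    rw [← List.toFinset_card_of_nodup h.nodup_flatten, nE, ← card_univ]
    exact congrArg card (eq_univ_iff_forall.2 fun e => List.mem_toFinset.2 (hall e))
  have := h.card_verts
  rw [hverts, card_univ, hlen] at this
  exact (Nat.add_comm _ _).trans this

end Multigraph

namespace Multigraph

variable {G : Multigraph}

/-! ### Bridgeless graphs of exceedance two -/

section Numbered

variable {n m : ℕ}

/-- The multigraph with vertices `0, …, n - 1` and edges `0, …, m - 1`, edge `e` going from `s e` to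
`t e`. -/
abbrev ofEnds (s t : Fin m → Fin n) : Multigraph where
  V := Fin n
  E := Fin m
  src := s
  tgt := t

theorem nV_ofEnds (s t : Fin m → Fin n) : (ofEnds s t).nV = n :=
  Fintype.card_fin n

theorem nE_ofEnds (s t : Fin m → Fin n) : (ofEnds s t).nE = m :=
  Fintype.card_fin m

theorem nV_subdivide_ofEnds {s t : Fin m → Fin n} {w : Fin m → ℕ}
    (hw : ZeroAcyclic (ofEnds s t) w) :
    (subdivide (ofEnds s t) w).nV + m = n + ∑ e, w e := by
  have h := nV_subdivide hw
  rwa [nV_ofEnds, nE_ofEnds] at h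

theorem nonDisconnections_ofEnds {s t : Fin m → Fin n} {i : ℕ} {L : List (Finset (Fin m))}
    (hL : ∀ F, F ∈ L ↔ F.card = i ∧
      ∀ χ : Fin n → Bool, (∀ e ∉ F, χ (s e) = χ (t e)) → ∀ u v, χ u = χ v) :
    (ofEnds s t).nonDisconnections i = L.toFinset := by
  ext F
  rw [mem_nonDisconnections, List.mem_toFinset, hL, connOn_iff_forall_coloring]
  simp only [mem_sdiff, mem_univ, true_and]

/-- The complete graph on four vertices, with numbered edges; the last two edges are disjoint. -/
abbrev numberedK4 : Multigraph :=
  ofEnds (n := 4) ![0, 1, 0, 2, 0, 1] ![1, 3, 2, 3, 3, 2]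

/-- The 4-cycle with two opposite edges doubled; the last two edges are the single ones. -/
abbrev necklace : Multigraph :=
  ofEnds (n := 4) ![1, 1, 0, 0, 0, 2] ![2, 2, 3, 3, 1, 3]

theorem nonDisconnections_numberedK4_two : numberedK4.nonDisconnections 2 =
    ([{0, 1}, {0, 2}, {0, 3}, {0, 4}, {0, 5}, {1, 2}, {1, 3}, {1, 4}, {1, 5}, {2, 3}, {2, 4},
      {2, 5}, {3, 4}, {3, 5}, {4, 5}] : List (Finset (Fin 6))).toFinset :=
  nonDisconnections_ofEnds (by decide +kernel)

theorem nonDisconnections_numberedK4_three : numberedK4.nonDisconnections 3 =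
    ([{0, 1, 2}, {0, 1, 3}, {0, 2, 3}, {1, 2, 3}, {0, 1, 4}, {0, 3, 4}, {1, 2, 4}, {2, 3, 4},
      {0, 2, 5}, {0, 3, 5}, {1, 2, 5}, {1, 3, 5}, {0, 4, 5}, {1, 4, 5}, {2, 4, 5},
      {3, 4, 5}] : List (Finset (Fin 6))).toFinset :=
  nonDisconnections_ofEnds (by decide +kernel)

theorem nonDisconnections_necklace_two : necklace.nonDisconnections 2 =
    ([{0, 1}, {0, 2}, {0, 3}, {0, 4}, {0, 5}, {1, 2}, {1, 3}, {1, 4}, {1, 5}, {2, 3}, {2, 4},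
      {2, 5}, {3, 4}, {3, 5}] : List (Finset (Fin 6))).toFinset :=
  nonDisconnections_ofEnds (by decide +kernel)

theorem nonDisconnections_necklace_three : necklace.nonDisconnections 3 =
    ([{0, 1, 2}, {0, 1, 3}, {0, 2, 3}, {1, 2, 3}, {0, 2, 4}, {0, 3, 4}, {1, 2, 4}, {1, 3, 4},
      {0, 2, 5}, {0, 3, 5}, {1, 2, 5}, {1, 3, 5}] : List (Finset (Fin 6))).toFinset :=
  nonDisconnections_ofEnds (by decide +kernel)

theorem existsUnique_numberedK4_edge :
    ∀ p : Fin 4 × Fin 4, p.1 < p.2 → ∃! e, (numberedK4.src e, numberedK4.tgt e) = p := by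
  unfold ExistsUnique
  decide +kernel

/-- The isomorphism matching each numbered edge with its pair of endpoints. -/
def numberedK4Iso : MGIso numberedK4 K4 where
  vMap := Equiv.refl (Fin 4)
  eMap := Equiv.ofBijective
    (fun e : Fin 6 => (⟨(numberedK4.src e, numberedK4.tgt e), by decide +revert⟩ : K4.E))
    ((Function.bijective_iff_existsUnique _).2 fun p => by
      obtain ⟨e, he, hunique⟩ := existsUnique_numberedK4_edge p.1 p.2
      exact ⟨e, Subtype.ext he, fun f hf => hunique f (congrArg Subtype.val hf)⟩)
  ends_eq _ := Or.inl ⟨rfl, rfl⟩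

theorem hasPositiveCotree_of_mem_nonDisconnections {D : Multigraph} {w : D.E → ℕ} {i : ℕ}
    (hi : i + D.nV = D.nE + 1) {F : Finset D.E} (hF : F ∈ D.nonDisconnections i)
    (hpos : ∀ e ∈ F, w e ≠ 0) : D.HasPositiveCotree w := by
  obtain ⟨rfl, hconn⟩ := mem_nonDisconnections.1 hF
  exact ⟨F, hconn, hi, hpos⟩

theorem hasPositiveCotree_numberedK4 {w : Fin 6 → ℕ} (h₅ : w 5 ≠ 0)
    (h₀₁₄ : w 0 + w 1 ≠ 0 ∨ w 4 ≠ 0) (h₂₃₄ : w 2 + w 3 ≠ 0 ∨ w 4 ≠ 0)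
    (h₀₁₂₃ : w 0 + w 1 ≠ 0 ∨ w 2 + w 3 ≠ 0) : numberedK4.HasPositiveCotree w := by
  obtain ⟨F, hF, hpos⟩ : ∃ F ∈ numberedK4.nonDisconnections 3, ∀ e ∈ F, w e ≠ 0 := by
    rw [nonDisconnections_numberedK4_three]
    simp only [List.mem_toFinset, List.mem_cons, exists_eq_or_imp, forall_mem_insert,
      mem_singleton, forall_eq]
    grind
  exact hasPositiveCotree_of_mem_nonDisconnections rfl hF hpos

theorem hasPositiveCotree_necklace {w : Fin 6 → ℕ} (h₀₁ : w 0 + w 1 ≠ 0) (h₂₃ : w 2 + w 3 ≠ 0)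
    (h₄ : w 4 ≠ 0) : necklace.HasPositiveCotree w := by
  obtain ⟨F, hF, hpos⟩ : ∃ F ∈ necklace.nonDisconnections 3, ∀ e ∈ F, w e ≠ 0 := by
    rw [nonDisconnections_necklace_three]
    simp only [List.mem_toFinset, List.mem_cons, exists_eq_or_imp, forall_mem_insert,
      mem_singleton, forall_eq]
    grind
  exact hasPositiveCotree_of_mem_nonDisconnections rfl hF hpos

end Numbered

/-- `G` consists of two bands of two parallel chains joined by two nonempty chains; one chain of
each band may be empty. -/
def IsNecklaceSubdivision (G : Multigraph) : Prop :=
  ∃ w : Fin 6 → ℕ, IsIso G (subdivide necklace w) ∧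
    w 0 + w 1 ≠ 0 ∧ w 2 + w 3 ≠ 0 ∧ w 4 ≠ 0 ∧ w 5 ≠ 0

/-- `G` consists of three paths `t` from `u` to `v`, at most one of them empty, and a nonempty path
`l` from `u'` to `v'`. -/
structure ThetaPlusEar (u v u' v' : G.V) (t : Fin 3 → List G.E) (l : List G.E) : Prop where
  isWalk : ∀ i, G.IsWalk u v (t i)
  isWalk_ear : G.IsWalk u' v' l
  ear_ne_nil : l ≠ []
  length_add_length_ne_zero : ∀ i j, i ≠ j → (t i).length + (t j).length ≠ 0
  count_eq_one : ∀ e, ∑ i, (t i).count e + l.count e = 1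

namespace ThetaPlusEar

variable {u v u' v' : G.V} {t : Fin 3 → List G.E} {l : List G.E}

theorem reverse_ear (h : ThetaPlusEar u v u' v' t l) : ThetaPlusEar u v v' u' t l.reverse where
  isWalk := h.isWalk
  isWalk_ear := h.isWalk_ear.reverse
  ear_ne_nil := List.reverse_ne_nil_iff.2 h.ear_ne_nil
  length_add_length_ne_zero := h.length_add_length_ne_zero
  count_eq_one e := by rw [List.count_reverse, h.count_eq_one]

theorem exists_third {i j : Fin 3} (hij : i ≠ j) :
    ∃ k, i ≠ k ∧ j ≠ k ∧ ∀ f : Fin 3 → ℕ, ∑ m, f m = f i + f j + f k := by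
  obtain ⟨k, hik, hjk, huniv⟩ : ∃ k, i ≠ k ∧ j ≠ k ∧ (univ : Finset (Fin 3)) = {i, j, k} := by
    decide +revert
  refine ⟨k, hik, hjk, fun f => ?_⟩
  rw [huniv, sum_insert (by simp [hij, hik]), sum_insert (by simpa using hjk), sum_singleton,
    Nat.add_assoc]

theorem isWeakSubdivision_K4 (h : ThetaPlusEar u v u' v' t l) (hG : G.Connected)
    (hE : G.nE = G.nV + 2) {i j : Fin 3} (hij : i ≠ j) (hu' : u' ∈ verts u (t i))
    (hv' : v' ∈ verts u (t j)) : ∃ w, IsWeakSubdivision G K4 w := by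
  obtain ⟨k, hik, hjk, hsum⟩ := exists_third hij
  obtain ⟨x₁, x₂, hx, hx₁, hx₂⟩ := (h.isWalk i).exists_split hu'
  obtain ⟨y₁, y₂, hy, hy₁, hy₂⟩ := (h.isWalk j).exists_split hv'
  let C : ChainDecomposition G numberedK4 :=
    { node := ![u, u', v', v]
      chain := ![x₁, x₂, y₁, y₂, t k, l]
      isWalk := fun e => by
        fin_cases e
        exacts [hx₁, hx₂, hy₁, hy₂, h.isWalk k, h.isWalk_ear]
      count_eq_one := fun e => by
        have hcount := h.count_eq_one e
        rw [hsum, hx, hy, List.count_append, List.count_append] at hcount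
        simp only [Fin.sum_univ_six, Matrix.cons_val]
        omega }
  have hik := h.length_add_length_ne_zero i k hik
  have hjk := h.length_add_length_ne_zero j k hjk
  have hij := h.length_add_length_ne_zero i j hij
  rw [hx, List.length_append] at hik hij
  rw [hy, List.length_append] at hjk hij
  have hC : numberedK4.HasPositiveCotree C.length :=
    hasPositiveCotree_numberedK4 (List.length_pos_iff.2 h.ear_ne_nil).ne'
      (not_and_or.1 <| mt Nat.add_eq_zero_iff.2 hik) (not_and_or.1 <| mt Nat.add_eq_zero_iff.2 hjk)
      (not_and_or.1 <| mt Nat.add_eq_zero_iff.2 hij)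
  have : Nonempty K4.V := ⟨numberedK4Iso.vMap 0⟩
  have hcard : G.nE + K4.nV = K4.nE + G.nV := by
    rw [hE, ← nV_eq_of_isIso ⟨numberedK4Iso⟩, ← nE_eq_of_isIso ⟨numberedK4Iso⟩,
      nV_ofEnds, nE_ofEnds]
    omega
  exact ⟨_, (C.ofIso numberedK4Iso).isWeakSubdivision hG hcard
    (hC.ofIso numberedK4Iso fun e => C.length_ofIso numberedK4Iso e)⟩

theorem of_split (h : ThetaPlusEar u v u' v' t l) (hG : G.Connected)
    (hE : G.nE = G.nV + 2) {i : Fin 3} {x y z : List G.E} (hi : t i = x ++ y ++ z)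
    (hx : G.IsWalk u u' x) (hy : G.IsWalk u' v' y) (hz : G.IsWalk v' v z) :
    (∃ w, IsWeakSubdivision G K4 w) ∨ G.IsNecklaceSubdivision := by
  obtain ⟨j, hij⟩ := exists_ne i
  have hu't : u' ∈ verts u (t i) := by
    rw [hi, List.append_assoc, verts, ends_append, ← insert_union]
    exact mem_union_left _ hx.right_mem
  have hv't : v' ∈ verts u (t i) := by
    rw [hi, verts, ends_append, ← insert_union]
    exact mem_union_left _ (hx.append hy).right_mem
  by_cases hx0 : x = []
  · subst hx0
    have hu' : u' ∈ verts u (t j) := hx.eq_of_nil ▸ mem_insert_self u _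
    exact Or.inl (h.isWeakSubdivision_K4 hG hE hij hu' hv't)
  by_cases hz0 : z = []
  · subst hz0
    have hv' : v' ∈ verts u (t j) := hz.eq_of_nil ▸ (h.isWalk j).right_mem
    exact Or.inl (h.isWeakSubdivision_K4 hG hE hij.symm hu't hv')
  obtain ⟨k, -, hjk, hsum⟩ := exists_third hij.symm
  let C : ChainDecomposition G necklace :=
    { node := ![u, u', v', v]
      chain := ![y, l, t j, t k, x, z]
      isWalk := fun e => by
        fin_cases e
        exacts [hy, h.isWalk_ear, h.isWalk j, h.isWalk k, hx, hz]
      count_eq_one := fun e => by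
        have hcount := h.count_eq_one e
        rw [hsum, hi, List.count_append, List.count_append] at hcount
        simp only [Fin.sum_univ_six, Matrix.cons_val]
        omega }
  have hl : y.length + l.length ≠ 0 := by
    have := List.length_pos_iff.2 h.ear_ne_nil
    omega
  have hx0 : x.length ≠ 0 := (List.length_pos_iff.2 hx0).ne'
  have hz0 : z.length ≠ 0 := (List.length_pos_iff.2 hz0).ne'
  have ht := h.length_add_length_ne_zero j k hjk
  have hC : necklace.HasPositiveCotree C.length := hasPositiveCotree_necklace hl ht hx0
  have : Nonempty necklace.V := ⟨(0 : Fin 4)⟩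
  have hcard : G.nE + necklace.nV = necklace.nE + G.nV := by
    rw [hE, nV_ofEnds, nE_ofEnds]
    omega
  exact Or.inr ⟨C.length, (C.isWeakSubdivision hG hcard hC).2, hl, ht, hx0, hz0⟩

theorem isWeakSubdivision_K4_or_isNecklaceSubdivision (h : ThetaPlusEar u v u' v' t l)
    (hG : G.Connected) (hE : G.nE = G.nV + 2) (hu' : ∃ i, u' ∈ verts u (t i))
    (hv' : ∃ i, v' ∈ verts u (t i)) :
    (∃ w, IsWeakSubdivision G K4 w) ∨ G.IsNecklaceSubdivision := by
  obtain ⟨i, hu'⟩ := hu'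
  obtain ⟨j, hv'⟩ := hv'
  by_cases hij : i = j
  · subst hij
    obtain ⟨x, r, hi, hx, hr⟩ := (h.isWalk i).exists_split hu'
    have hv'xr : v' ∈ verts u x ∨ v' ∈ verts u' r := by
      rw [hi] at hv'
      simp only [verts, ends_append, mem_insert, mem_union] at hv' ⊢
      tauto
    rcases hv'xr with hv'x | hv'r
    · obtain ⟨x, y, rfl, hx, hy⟩ := hx.exists_split hv'x
      exact h.reverse_ear.of_split hG hE hi hx hy hr
    · obtain ⟨y, z, rfl, hy, hz⟩ := hr.exists_split hv'r
      exact h.of_split hG hE (hi.trans (List.append_assoc _ _ _).symm) hx hy hz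
  · exact Or.inl (h.isWeakSubdivision_K4 hG hE hij hu' hv')

end ThetaPlusEar

/-- The first two ears form the three paths: the first one is a closed walk at `p`, which is rotated
to start at `u` and then cut at `v`. -/
theorem exists_thetaPlusEar {p u v u' v' : G.V} {l₁ l₂ l₃ : List G.E} (h₁ : IsEar p [] p p l₁)
    (h₂ : IsEar p l₁ u v l₂) (h₃ : IsEar p (l₂ ++ l₁) u' v' l₃)
    (hcount : ∀ e, l₁.count e + l₂.count e + l₃.count e = 1) :
    ∃ t, ThetaPlusEar u v u' v' t l₃ ∧ (∃ i, u' ∈ verts u (t i)) ∧ ∃ i, v' ∈ verts u (t i) := by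
  obtain ⟨a, b, rfl, ha, hb⟩ := h₁.isWalk.exists_split h₂.left_mem
  have hverts : verts p (a ++ b) = verts u (b ++ a) := by
    have hba : b ++ a ≠ [] := fun h => h₁.ne_nil <| by simpa [and_comm] using h
    rw [h₁.isWalk.verts_eq_ends h₁.ne_nil, (hb.append ha).verts_eq_ends hba, ends_append,
      ends_append, union_comm]
  obtain ⟨c, d, hcd, hc, hd⟩ := (hb.append ha).exists_split (hverts ▸ h₂.right_mem)
  have hmem (x : G.V) (hx : x ∈ verts p (l₂ ++ (a ++ b))) :
      ∃ i, x ∈ verts u (![c, d.reverse, l₂] i) := by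
    rw [verts_append, hverts, hcd, verts, ends_append] at hx
    simp only [mem_insert, mem_union] at hx
    simp only [Fin.exists_fin_succ, verts, mem_insert, ends_reverse, Matrix.cons_val_zero,
      Matrix.cons_val_succ, IsEmpty.exists_iff, or_false]
    tauto
  refine ⟨![c, d.reverse, l₂],
    { isWalk := fun i => by
        fin_cases i
        exacts [hc, hd.reverse, h₂.isWalk]
      isWalk_ear := h₃.isWalk
      ear_ne_nil := h₃.ne_nil
      length_add_length_ne_zero := ?_
      count_eq_one := fun e => ?_ }, hmem u' h₃.left_mem, hmem v' h₃.right_mem⟩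
  · have hl₁ : c.length + d.length ≠ 0 := by
      rw [← List.length_append, ← hcd, List.length_append, Nat.add_comm, ← List.length_append]
      exact (List.length_pos_iff.2 h₁.ne_nil).ne'
    have hl₂ := List.length_pos_iff.2 h₂.ne_nil
    intro i j hij
    fin_cases i <;> fin_cases j <;>
      simp only [Fin.zero_eta, Fin.mk_one, Fin.reduceFinMk, Matrix.cons_val, List.length_reverse,
        ne_eq, not_true] at hij ⊢ <;> omega
  · have hce := congrArg (List.count e) hcd
    have hcounte := hcount e
    simp only [List.count_append] at hce hcounte
    simp only [Fin.sum_univ_three, Matrix.cons_val, List.count_reverse]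
    omega

theorem Connected.isWeakSubdivision_K4_or_isNecklaceSubdivision (hG : G.Connected)
    (hb : G.Bridgeless) (hE : G.nE = G.nV + 2) :
    (∃ w, IsWeakSubdivision G K4 w) ∨ G.IsNecklaceSubdivision := by
  obtain ⟨e⟩ : Nonempty G.E := Fintype.card_pos_iff.1 (hE.symm ▸ Nat.succ_pos _ : 0 < G.nE)
  let p : G.V := G.src e
  obtain ⟨Ls, hLs, hall⟩ := hG.exists_earSequence hb p
  have hlen : Ls.length = 3 := by
    have := hLs.length_add_nV hG hall
    omega
  obtain ⟨l₃, l₂, l₁, rfl⟩ := List.length_eq_three.1 hlen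
  have hnodup := hLs.nodup_flatten
  obtain - | ⟨h₃, h⟩ := hLs
  obtain - | ⟨h₂, h⟩ := h
  obtain - | ⟨h₁, h⟩ := h
  simp only [List.flatten_cons, List.flatten_nil, List.append_nil] at *
  obtain rfl := by simpa only [verts, ends_nil, insert_empty, mem_singleton] using h₁.left_mem
  obtain rfl := by simpa only [verts, ends_nil, insert_empty, mem_singleton] using h₁.right_mem
  obtain ⟨t, ht, hu', hv'⟩ := exists_thetaPlusEar h₁ h₂ h₃ fun e => by
    have := List.count_eq_one_of_mem hnodup (hall e)
    rw [List.count_append, List.count_append] at this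
    omega
  exact ht.isWeakSubdivision_K4_or_isNecklaceSubdivision hG hE hu' hv'

end Multigraph

namespace Multigraph

variable {G H : Multigraph}

/-! ### Improving necklaces -/

theorem nonDisc_two_subdivide_necklace (w : Fin 6 → ℕ) : (subdivide necklace w).nonDisc 2 =
    w 0 * w 1 + w 2 * w 3 + (w 0 + w 1) * (w 2 + w 3) +
      (w 4 + w 5) * (w 0 + w 1 + (w 2 + w 3)) := by
  rw [nonDisc_subdivide, nonDisconnections_necklace_two,
    List.sum_toFinset _ (by decide +kernel)]
  simp only [List.map_cons, List.map_nil, List.sum_cons, List.sum_nil, mem_singleton,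
    Fin.reduceEq, zero_ne_one, not_false_eq_true, prod_insert, prod_singleton]
  ring

theorem nonDisc_three_subdivide_necklace (w : Fin 6 → ℕ) : (subdivide necklace w).nonDisc 3 =
    (w 4 + w 5) * (w 0 + w 1) * (w 2 + w 3) + w 0 * w 1 * (w 2 + w 3) +
      w 2 * w 3 * (w 0 + w 1) := by
  rw [nonDisc_subdivide, nonDisconnections_necklace_three,
    List.sum_toFinset _ (by decide +kernel)]
  simp only [List.map_cons, List.map_nil, List.sum_cons, List.sum_nil, mem_insert, mem_singleton,
    Fin.reduceEq, zero_ne_one, or_self, not_false_eq_true, prod_insert, prod_singleton]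
  ring

theorem nonDisc_two_subdivide_numberedK4 (w : Fin 6 → ℕ) : (subdivide numberedK4 w).nonDisc 2 =
    w 0 * w 2 + w 1 * w 3 + (w 0 + w 2) * (w 1 + w 3) +
      (w 4 + w 5) * (w 0 + w 2 + (w 1 + w 3)) + w 4 * w 5 := by
  rw [nonDisc_subdivide, nonDisconnections_numberedK4_two,
    List.sum_toFinset _ (by decide +kernel)]
  simp only [List.map_cons, List.map_nil, List.sum_cons, List.sum_nil, mem_singleton,
    Fin.reduceEq, zero_ne_one, not_false_eq_true, prod_insert, prod_singleton]
  ring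

theorem nonDisc_three_subdivide_numberedK4 (w : Fin 6 → ℕ) : (subdivide numberedK4 w).nonDisc 3 =
    w 4 * (w 0 + w 2) * (w 1 + w 3) + w 5 * (w 0 + w 1) * (w 2 + w 3) +
      w 4 * w 5 * (w 0 + w 2 + (w 1 + w 3)) + w 0 * w 2 * (w 1 + w 3) +
      w 1 * w 3 * (w 0 + w 2) := by
  rw [nonDisc_subdivide, nonDisconnections_numberedK4_three,
    List.sum_toFinset _ (by decide +kernel)]
  simp only [List.map_cons, List.map_nil, List.sum_cons, List.sum_nil, mem_insert, mem_singleton,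
    Fin.reduceEq, zero_ne_one, or_self, not_false_eq_true, prod_insert, prod_singleton]
  ring

theorem mul_le_mul_of_balanced {a b x y : ℕ} (hsum : x + y = a + b) (hyx : y ≤ x)
    (hxy : x ≤ y + 1) : a * b ≤ x * y := by
  wlog hab : a ≤ b generalizing a b
  · rw [Nat.mul_comm a b]
    exact this (hsum.trans (Nat.add_comm a b)) (Nat.le_of_not_le hab)
  obtain ⟨c, rfl⟩ := Nat.exists_eq_add_of_le (show a ≤ y by omega)
  obtain rfl : b = x + c := by omega
  calc a * (x + c) = a * x + a * c := Nat.mul_add a x c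
    _ ≤ a * x + x * c := Nat.add_le_add_left (Nat.mul_le_mul_right c (by omega)) _
    _ = x * (a + c) := by ring

/-- The improved graph balances each band, places the two halves of a band on disjoint edges of
`K₄`, and shortens one of the two joining chains to a single edge. -/
theorem exists_numberedK4_weights_nonDisc_lt {w : Fin 6 → ℕ} (h₂₃ : w 2 + w 3 ≠ 0)
    (h₄ : w 4 ≠ 0) (h₅ : w 5 ≠ 0) :
    ∃ w' : Fin 6 → ℕ, ∑ e, w' e = ∑ e, w e ∧ numberedK4.HasPositiveCotree w' ∧
      (subdivide necklace w).nonDisc 2 < (subdivide numberedK4 w').nonDisc 2 ∧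
      (subdivide necklace w).nonDisc 3 < (subdivide numberedK4 w').nonDisc 3 := by
  obtain ⟨x, y, hA, hyx, hxy⟩ : ∃ x y, x + y = w 0 + w 1 ∧ y ≤ x ∧ x ≤ y + 1 :=
    ⟨(w 0 + w 1 + 1) / 2, (w 0 + w 1) / 2, by omega, by omega, by omega⟩
  obtain ⟨z, t, hB, htz, hzt⟩ : ∃ z t, z + t = w 2 + w 3 ∧ t ≤ z ∧ z ≤ t + 1 :=
    ⟨(w 2 + w 3 + 1) / 2, (w 2 + w 3) / 2, by omega, by omega, by omega⟩
  obtain ⟨c, hc⟩ : ∃ c, c + 1 = w 4 + w 5 := ⟨w 4 + w 5 - 1, by omega⟩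
  have hxymul : w 0 * w 1 ≤ x * y := mul_le_mul_of_balanced hA hyx hxy
  have hztmul : w 2 * w 3 ≤ z * t := mul_le_mul_of_balanced hB htz hzt
  have hcross : x * t + z * y ≤ x * y + z * t := by
    rcases Nat.le_total (x + y) (z + t) with hle | hle
    · exact mul_add_mul_le_mul_add_mul (by omega) (by omega)
    · exact mul_add_mul_le_mul_add_mul' (by omega) (by omega)
  refine ⟨![x, t, y, z, c, 1], ?_, ?_, ?_, ?_⟩
  · simp only [Fin.sum_univ_six, Matrix.cons_val]
    omega
  · refine hasPositiveCotree_numberedK4 ?_ ?_ ?_ ?_ <;> simp only [Matrix.cons_val] <;> omega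
  · rw [nonDisc_two_subdivide_necklace, nonDisc_two_subdivide_numberedK4, ← hA, ← hB, ← hc]
    simp only [Matrix.cons_val]
    have hcpos : 0 < c := by omega
    linarith
  · rw [nonDisc_three_subdivide_necklace, nonDisc_three_subdivide_numberedK4, ← hA, ← hB, ← hc]
    simp only [Matrix.cons_val]
    have hcpos : 0 < c * (x + y + (t + z)) := Nat.mul_pos (by omega) (by omega)
    linarith [Nat.mul_le_mul_right (z + t) hxymul, Nat.mul_le_mul_right (x + y) hztmul]

theorem IsNecklaceSubdivision.exists_nonDisc_lt (hG : G.IsNecklaceSubdivision) :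
    ∃ H : Multigraph, H.nV = G.nV ∧ H.nE = G.nE ∧ H.Connected ∧
      G.nonDisc 2 < H.nonDisc 2 ∧ G.nonDisc 3 < H.nonDisc 3 := by
  obtain ⟨w, hiso, h₀₁, h₂₃, h₄, h₅⟩ := hG
  obtain ⟨w', hsum, hw', h2, h3⟩ := exists_numberedK4_weights_nonDisc_lt h₂₃ h₄ h₅
  have : Nonempty necklace.V := ⟨(0 : Fin 4)⟩
  have : Nonempty numberedK4.V := ⟨(0 : Fin 4)⟩
  have hnV := nV_subdivide_ofEnds (hasPositiveCotree_necklace h₀₁ h₂₃ h₄).zeroAcyclic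
  have hnV' := nV_subdivide_ofEnds hw'.zeroAcyclic
  rw [hsum] at hnV'
  refine ⟨subdivide numberedK4 w', ?_, ?_, hw'.connected.subdivide w', ?_, ?_⟩
  · rw [nV_eq_of_isIso hiso]
    exact Nat.add_right_cancel (hnV'.trans hnV.symm)
  · rw [nE_eq_of_isIso hiso, nE_subdivide, nE_subdivide]
    exact hsum
  · rwa [nonDisc_eq_of_isIso hiso]
  · rwa [nonDisc_eq_of_isIso hiso]

end Multigraph

namespace Multigraph

variable {G H : Multigraph} {n : ℕ}

/-! ### Optimality -/

theorem exists_nonDisc_lt (hG : memG G n (n + 2))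
    (h : ¬ G.Bridgeless ∨ ¬ ∃ w, IsWeakSubdivision G K4 w) :
    ∃ H, memG H n (n + 2) ∧ G.nonDisc 2 < H.nonDisc 2 ∧ G.nonDisc 3 < H.nonDisc 3 := by
  obtain ⟨hV, hE, hconn⟩ := hG
  by_cases hb : G.Bridgeless
  · have hneck : G.IsNecklaceSubdivision :=
      (hconn.isWeakSubdivision_K4_or_isNecklaceSubdivision hb (hV.symm ▸ hE)).resolve_left
        (h.resolve_left (not_not.2 hb))
    obtain ⟨H, hHV, hHE, hH, h2, h3⟩ := hneck.exists_nonDisc_lt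
    exact ⟨H, ⟨hHV.trans hV, hHE.trans hE, hH⟩, h2, h3⟩
  · obtain ⟨H, hHV, hHE, hH, hlt⟩ := exists_nonDisc_lt_of_not_bridgeless hconn hb (by omega)
    exact ⟨H, ⟨hHV.trans hV, hHE.trans hE, hH⟩, hlt 2 (by omega) (by omega),
      hlt 3 (by omega) (by omega)⟩

theorem exists_bridgeless_nonDisc_lt (hG : memG G n (n + 2))
    (h : ¬ G.Bridgeless ∨ ¬ ∃ w, IsWeakSubdivision G K4 w) :
    ∃ H, memG H n (n + 2) ∧ H.Bridgeless ∧
      G.nonDisc 2 < H.nonDisc 2 ∧ G.nonDisc 3 < H.nonDisc 3 := by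
  induction hd : G.d 2 using Nat.strong_induction_on generalizing G with
  | _ d ih =>
    obtain ⟨H, hH, h2, h3⟩ := exists_nonDisc_lt hG h
    by_cases hb : H.Bridgeless
    · exact ⟨H, hH, hb, h2, h3⟩
    · have hlt : H.d 2 < d := hd ▸ d_lt_d_of_nonDisc_lt (hG.2.1.trans hH.2.1.symm) h2
      obtain ⟨K, hK, hKb, hK2, hK3⟩ := ih _ hlt hH (Or.inl hb) rfl
      exact ⟨K, hK, hKb, h2.trans hK2, h3.trans hK3⟩

theorem rel_lt_rel_of_bridgeless (hG : memG G n (n + 2)) (hH : memG H n (n + 2))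
    (hb : H.Bridgeless) (h2 : G.nonDisc 2 < H.nonDisc 2) (h3 : G.nonDisc 3 < H.nonDisc 3)
    {p : ℝ} (hp0 : 0 < p) (hp1 : p < 1) : G.rel p < H.rel p := by
  obtain ⟨hV, hE, -⟩ := hG
  have hEH : G.nE = H.nE := hE.trans hH.2.1.symm
  refine rel_lt_rel hEH (fun i => ?_) h2 hp0 hp1
  match i with
  | 0 => exact nonDisc_le_of_d_eq_zero hEH hH.2.2.d_zero
  | 1 => exact nonDisc_le_of_d_eq_zero hEH hb.d_one
  | 2 => exact h2.le
  | 3 => exact h3.le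
  | i + 4 =>
    obtain ⟨e⟩ : Nonempty G.E := Fintype.card_pos_iff.1 (hE.symm ▸ Nat.succ_pos _ : 0 < G.nE)
    have : Nonempty G.V := ⟨G.src e⟩
    exact (nonDisc_eq_zero_of_nE_lt (by omega)).trans_le (Nat.zero_le _)

end Multigraph

/-- if G ∈ 𝒢_{n,n+2} is not a weak K₄-subdivision, some bridgeless
H ∈ 𝒢_{n,n+2} has strictly smaller d₂ and d₃; hence every p-optimal (n,n+2)-graph
is a weak K₄-subdivision. -/
theorem p_optimal_k2_is_K4_subdivision (n : ℕ) (hn : 1 ≤ n) :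
    (∀ G : Multigraph, memG G n (n + 2) →
      (¬ ∃ w : K4.E → ℕ, IsWeakSubdivision G K4 w) →
      ∃ H : Multigraph, memG H n (n + 2) ∧ H.Bridgeless ∧
        H.d 2 < G.d 2 ∧ H.d 3 < G.d 3) ∧
    (∀ p : ℝ, 0 < p → p < 1 → ∀ G : Multigraph, pOptimal G n (n + 2) p →
      ∃ w : K4.E → ℕ, IsWeakSubdivision G K4 w) := by
  refine ⟨fun G hG hK4 => ?_, fun p hp0 hp1 G hG => ?_⟩
  · obtain ⟨H, hH, hb, h2, h3⟩ := Multigraph.exists_bridgeless_nonDisc_lt hG (Or.inr hK4)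
    have hE : G.nE = H.nE := hG.2.1.trans hH.2.1.symm
    exact ⟨H, hH, hb, Multigraph.d_lt_d_of_nonDisc_lt hE h2, Multigraph.d_lt_d_of_nonDisc_lt hE h3⟩
  · by_contra hK4
    obtain ⟨H, hH, hb, h2, h3⟩ := Multigraph.exists_bridgeless_nonDisc_lt hG.1 (Or.inr hK4)
    exact (hG.2 H hH).not_gt (Multigraph.rel_lt_rel_of_bridgeless hG.1 hH hb h2 h3 hp0 hp1)
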